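/- Under the standing assumptions, there exist A₀ ≥ 1 and c₁ > 0, depending only on n, the AD-regularity constant C₀, c, c' and the constants in the weak-A∞ condition in B_{R₀}, such that if A ≥ A₀ then the set G₀ := R₀ \ (B_H ∪ B_L) satisfies ω^p(G₀) ≥ c₁ and μ(G₀) ≥ c₁ μ(R₀). -/

import Mathlib

open Metric MeasureTheory Set Filter Topology

noncomputable section

/-- Euclidean space `ℝ^d`. -/
abbrev Euc (d : ℕ) : Type := EuclideanSpace ℝ (Fin d)

namespace HarmMeas

/-- Distance between two sets. -/
def setD {d : ℕ} (s t : Set (Euc d)) : ℝ := sInf (Set.image2 dist s t)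

/-- A continuous function is subharmonic on `U` if it satisfies the sub-mean-value
property on every ball whose closure is contained in `U`. -/
def SubharmonicOn {d : ℕ} (u : Euc d → ℝ) (U : Set (Euc d)) : Prop :=
  ContinuousOn u U ∧ ∀ x ∈ U, ∀ r : ℝ, 0 < r → closedBall x r ⊆ U →
    u x ≤ ⨍ y in ball x r, u y

/-- Harmonic (continuous) functions: both `u` and `-u` are subharmonic. -/
def HarmonicOnS {d : ℕ} (u : Euc d → ℝ) (U : Set (Euc d)) : Prop :=
  SubharmonicOn u U ∧ SubharmonicOn (fun y => -u y) U

/-- The upper (Perron) class associated to boundary data `f` on the open set `Ω`: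
superharmonic functions on `Ω`, bounded below, whose liminf at each boundary point
dominates `f` there. -/
def upperFamily {d : ℕ} (Ω : Set (Euc d)) (f : Euc d → ℝ) : Set (Euc d → ℝ) :=
  {u | SubharmonicOn (fun y => -u y) Ω ∧ BddBelow (u '' Ω) ∧
       ∀ ξ ∈ frontier Ω, f ξ ≤ Filter.liminf u (nhdsWithin ξ Ω)}

/-- The (upper) Perron solution of the Dirichlet problem in `Ω` with boundary data `f`,
evaluated at `p`. -/
def perron {d : ℕ} (Ω : Set (Euc d)) (f : Euc d → ℝ) (p : Euc d) : ℝ :=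
  sInf ((fun u => u p) '' upperFamily Ω f)

/-- Harmonic measure `ω^p(A)` of `A` for the open set `Ω` with pole `p`: the value at `p`
of the Perron solution with boundary data the characteristic function of `A`. -/
def hMeasure {d : ℕ} (Ω : Set (Euc d)) (p : Euc d) (A : Set (Euc d)) : ℝ :=
  perron Ω (A.indicator fun _ => 1) p

/-- The Green function `g(p,x)` of `Ω ⊆ ℝ^{n+1}` with pole `p`: the fundamental solution
`|x-p|^{1-n}` minus the Perron solution with the fundamental solution as boundary data. -/
def greenFn (n : ℕ) (Ω : Set (Euc (n+1))) (p x : Euc (n+1)) : ℝ :=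
  ‖x - p‖ ^ ((1 : ℤ) - n) - perron Ω (fun ξ => ‖ξ - p‖ ^ ((1 : ℤ) - n)) x

/-- `F ⊆ ℝ^{n+1}` is `n`-AD-regular with constant `C₀`. -/
def ADRegular (n : ℕ) (C₀ : ℝ) (F : Set (Euc (n+1))) : Prop :=
  ∀ x ∈ F, ∀ r : ℝ, 0 < r → ENNReal.ofReal r ≤ EMetric.diam F →
    ENNReal.ofReal (C₀⁻¹ * r ^ n) ≤ μH[n] (F ∩ ball x r) ∧
      μH[n] (F ∩ ball x r) ≤ ENNReal.ofReal (C₀ * r ^ n)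

/-- A `λ`-carrot curve from `x` to `y` in `Ω`: a curve `γ ⊆ Ω ∪ {y}` with endpoints `x`
and `y` such that `dist(z, ∂Ω) ≥ λ ⋅ ℋ¹(γ(y,z))` for every point `z = γ(t)` of the curve,
where `γ(y,z)` is the arc of `γ` between `y` and `z`. -/
def CarrotCurve {d : ℕ} (Ω : Set (Euc d)) (lam : ℝ) (x y : Euc d) : Prop :=
  ∃ γ : ℝ → Euc d, ContinuousOn γ (Icc 0 1) ∧ γ 0 = x ∧ γ 1 = y ∧
    γ '' Icc 0 1 ⊆ Ω ∪ {y} ∧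
    ∀ t ∈ Icc (0:ℝ) 1,
      ENNReal.ofReal lam * μH[1] (γ '' Icc t 1) ≤
        ENNReal.ofReal (infDist (γ t) (frontier Ω))

/-- A `C`-good Harnack chain from `x ∈ Ω` to `y ∈ cl Ω`, all of whose balls are moreover
contained in the set `W`: consecutive balls meet, each ball has radius comparable (with
constant `C`) to its distance to `∂Ω`, radii are quasi-monotone, and for each `t > 0`
there are at most `C` balls of radius in `(t, 2t]`.  If `y ∈ Ω` the chain is finite and
`y` lies in its last ball; if `y ∈ ∂Ω` the chain is infinite and the balls converge
to `y`. -/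
def GoodChainIn {d : ℕ} (Ω W : Set (Euc d)) (C : ℝ) (x y : Euc d) : Prop :=
  (y ∈ Ω ∧ ∃ (N : ℕ) (c : ℕ → Euc d) (r : ℕ → ℝ),
    x ∈ ball (c 0) (r 0) ∧ y ∈ ball (c N) (r N) ∧
    (∀ j ≤ N, 0 < r j ∧ ball (c j) (r j) ⊆ Ω ∩ W) ∧
    (∀ j < N, (ball (c j) (r j) ∩ ball (c (j+1)) (r (j+1))).Nonempty) ∧
    (∀ j ≤ N, C⁻¹ * setD (ball (c j) (r j)) (frontier Ω) ≤ r j ∧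
      r j ≤ C * setD (ball (c j) (r j)) (frontier Ω)) ∧
    (∀ i j, i ≤ N → j ≤ N → i < j → r j ≤ C * r i) ∧
    (∀ t : ℝ, 0 < t →
      {j | j ≤ N ∧ t < r j ∧ r j ≤ 2 * t}.Finite ∧
      (Nat.card {j | j ≤ N ∧ t < r j ∧ r j ≤ 2 * t} : ℝ) ≤ C))
  ∨ (y ∈ frontier Ω ∧ ∃ (c : ℕ → Euc d) (r : ℕ → ℝ),
    x ∈ ball (c 0) (r 0) ∧
    Filter.Tendsto (fun j => infDist y (ball (c j) (r j))) atTop (nhds 0) ∧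
    (∀ j, 0 < r j ∧ ball (c j) (r j) ⊆ Ω ∩ W) ∧
    (∀ j, (ball (c j) (r j) ∩ ball (c (j+1)) (r (j+1))).Nonempty) ∧
    (∀ j, C⁻¹ * setD (ball (c j) (r j)) (frontier Ω) ≤ r j ∧
      r j ≤ C * setD (ball (c j) (r j)) (frontier Ω)) ∧
    (∀ i j : ℕ, i < j → r j ≤ C * r i) ∧
    (∀ t : ℝ, 0 < t →
      {j | t < r j ∧ r j ≤ 2 * t}.Finite ∧
      (Nat.card {j | t < r j ∧ r j ≤ 2 * t} : ℝ) ≤ C))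

/-- A `C`-good Harnack chain from `x` to `y`. -/
def GoodChain {d : ℕ} (Ω : Set (Euc d)) (C : ℝ) (x y : Euc d) : Prop :=
  GoodChainIn Ω Set.univ C x y


/-- The harmonic measure of the open set `Ω` satisfies the weak-`A∞` condition: for every
`ε₀ ∈ (0,1)` there is `δ₀ ∈ (0,1)` such that for every ball `B` centered on `∂Ω`, every
pole `p ∈ Ω \ 4B` and every Borel `E ⊆ B ∩ ∂Ω`, `ℋⁿ(E) ≤ δ₀ ℋⁿ(B ∩ ∂Ω)` implies
`ω^p(E) ≤ ε₀ ω^p(2B)`. -/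
def WeakAInfty (n : ℕ) (Ω : Set (Euc (n+1))) : Prop :=
  ∀ ε₀ ∈ Set.Ioo (0:ℝ) 1, ∃ δ₀ ∈ Set.Ioo (0:ℝ) 1,
    ∀ x₀ ∈ frontier Ω, ∀ r₀ : ℝ, 0 < r₀ →
      ∀ p ∈ Ω \ closedBall x₀ (4 * r₀),
        ∀ A : Set (Euc (n+1)), MeasurableSet A → A ⊆ ball x₀ r₀ ∩ frontier Ω →
          μH[n] A ≤ ENNReal.ofReal δ₀ * μH[n] (ball x₀ r₀ ∩ frontier Ω) →
          hMeasure Ω p A ≤ ε₀ * hMeasure Ω p (ball x₀ (2 * r₀))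

/-- `ω^p` satisfies the weak-`A∞` condition in the ball `B(x₀,r₀)`, with gauge `D`
(i.e. `δ₀ = D ε₀` is a witness for each `ε₀ ∈ (0,1)`). -/
def WeakAInftyBallWith (n : ℕ) (Ω : Set (Euc (n+1))) (p x₀ : Euc (n+1)) (r₀ : ℝ)
    (D : ℝ → ℝ) : Prop :=
  ∀ ε₀ ∈ Set.Ioo (0:ℝ) 1, D ε₀ ∈ Set.Ioo (0:ℝ) 1 ∧
    ∀ A : Set (Euc (n+1)), MeasurableSet A → A ⊆ ball x₀ r₀ ∩ frontier Ω →
      μH[n] A ≤ ENNReal.ofReal (D ε₀) * μH[n] (ball x₀ r₀ ∩ frontier Ω) →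
      hMeasure Ω p A ≤ ε₀ * hMeasure Ω p (ball x₀ (2 * r₀))

/-- The weak local John condition for `Ω ⊆ ℝ^{n+1}`: there are `λ, θ ∈ (0,1)` and `Λ ≥ 2`
such that every `x ∈ Ω` sees (through `λ`-carrot curves) a Borel subset `F` of
`B(x, Λ δ_Ω(x)) ∩ ∂Ω` of surface measure at least `θ ℋⁿ(B(x, Λ δ_Ω(x)) ∩ ∂Ω)`. -/
def WeakLocalJohn (n : ℕ) (Ω : Set (Euc (n+1))) : Prop :=
  ∃ lam ∈ Set.Ioo (0:ℝ) 1, ∃ θ ∈ Set.Ioo (0:ℝ) 1, ∃ Λ : ℝ, 2 ≤ Λ ∧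
    ∀ x ∈ Ω, ∃ F : Set (Euc (n+1)), MeasurableSet F ∧
      F ⊆ ball x (Λ * infDist x (frontier Ω)) ∩ frontier Ω ∧
      ENNReal.ofReal θ * μH[n] (ball x (Λ * infDist x (frontier Ω)) ∩ frontier Ω) ≤
        μH[n] F ∧
      ∀ y ∈ F, CarrotCurve Ω lam x y

/-- The corkscrew condition for `Ω`. -/
def CorkscrewCond {d : ℕ} (Ω : Set (Euc d)) : Prop :=
  ∃ c > (0:ℝ), ∀ x ∈ frontier Ω, ∀ ρ : ℝ, 0 < ρ → ENNReal.ofReal ρ ≤ EMetric.diam Ω →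
    ∃ (y : Euc d) (r : ℝ), c * ρ ≤ r ∧ ball y r ⊆ ball x ρ ∩ Ω

/-- `F ⊆ ℝ^{n+1}` is uniformly `n`-rectifiable, with AD-regularity constant `C₀` and
big-pieces-of-Lipschitz-images constants `θ`, `M`. -/
def UnifRectifiable (n : ℕ) (C₀ θ M : ℝ) (F : Set (Euc (n+1))) : Prop :=
  ADRegular n C₀ F ∧ 0 < θ ∧ 0 < M ∧
    ∀ x ∈ F, ∀ r : ℝ, 0 < r → ENNReal.ofReal r ≤ EMetric.diam F →
      ∃ g : Euc n → Euc (n+1), LipschitzOnWith (Real.toNNReal M) g (ball 0 r) ∧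
        ENNReal.ofReal (θ * r ^ n) ≤ μH[n] (F ∩ ball x r ∩ g '' ball 0 r)

/-- The set `WA(p,Λ)` of boundary points `x ∈ B(p, 10 δ_Ω(p)) ∩ ∂Ω` at which the harmonic
measure `ω^p` is comparable (with constant `Λ`) to the normalized surface measure
`μ(B(x,r))/μ(B(x,δ_Ω(p)))` at every scale `0 < r ≤ δ_Ω(p)`. -/
def WAset (n : ℕ) (Ω : Set (Euc (n+1))) (p : Euc (n+1)) (Λ : ℝ) : Set (Euc (n+1)) :=
  {x | x ∈ ball p (10 * infDist p (frontier Ω)) ∩ frontier Ω ∧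
    ∀ r : ℝ, 0 < r → r ≤ infDist p (frontier Ω) →
      Λ⁻¹ * ((μH[n] (frontier Ω ∩ ball x r)).toReal /
          (μH[n] (frontier Ω ∩ ball x (infDist p (frontier Ω)))).toReal) ≤
        hMeasure Ω p (ball x r) ∧
      hMeasure Ω p (ball x r) ≤
        Λ * ((μH[n] (frontier Ω ∩ ball x r)).toReal /
          (μH[n] (frontier Ω ∩ ball x (infDist p (frontier Ω)))).toReal)}


/-- A David–Semmes dyadic lattice associated to a measure `μ` supported on the set `F`,
with comparability constant `Cl`: for each generation `j ∈ ℤ` a partition of `F` into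
Borel "cubes" of side length `2^{-j}`, nested across generations, with
`diam Q ≤ ℓ(Q)`, `μ(Q) ≈ ℓ(Q)ⁿ`, centers deep inside the cubes, and small boundaries. -/
structure DSLattice (n : ℕ) (F : Set (Euc (n+1))) (μ : Measure (Euc (n+1))) (Cl : ℝ) where
  cube : ℤ → Set (Set (Euc (n+1)))
  center : Set (Euc (n+1)) → Euc (n+1)
  one_le_Cl : 1 ≤ Cl
  subset_F : ∀ j, ∀ Q ∈ cube j, Q ⊆ F
  nonempty : ∀ j, ∀ Q ∈ cube j, Q.Nonempty
  measurableSet : ∀ j, ∀ Q ∈ cube j, MeasurableSet Q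
  cover : ∀ j : ℤ, ENNReal.ofReal ((2:ℝ) ^ (-j)) ≤ EMetric.diam F →
    ∀ x ∈ F, ∃ Q ∈ cube j, x ∈ Q
  disj : ∀ j, ∀ Q ∈ cube j, ∀ Q' ∈ cube j, Q ≠ Q' → Disjoint Q Q'
  nested : ∀ j k : ℤ, k ≤ j → ∀ Q ∈ cube j, ∀ Q' ∈ cube k, (Q ∩ Q').Nonempty → Q ⊆ Q'
  diam_le : ∀ j, ∀ Q ∈ cube j, EMetric.diam Q ≤ ENNReal.ofReal ((2:ℝ) ^ (-j))
  measure_lb : ∀ j, ∀ Q ∈ cube j, ENNReal.ofReal (Cl⁻¹ * ((2:ℝ) ^ (-j)) ^ n) ≤ μ Q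
  measure_ub : ∀ j, ∀ Q ∈ cube j, μ Q ≤ ENNReal.ofReal (Cl * ((2:ℝ) ^ (-j)) ^ n)
  center_mem : ∀ j, ∀ Q ∈ cube j, center Q ∈ Q
  center_far : ∀ j, ∀ Q ∈ cube j, ∀ y ∈ F \ Q, Cl⁻¹ * (2:ℝ) ^ (-j) ≤ dist (center Q) y
  small_boundary : ∀ j, ∀ Q ∈ cube j, ∀ τ : ℝ, 0 < τ → τ < 1 →
    μ {x ∈ Q | infDist x (F \ Q) ≤ τ * (2:ℝ) ^ (-j)} +
        μ {x ∈ F \ Q | infDist x Q ≤ τ * (2:ℝ) ^ (-j)} ≤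
      ENNReal.ofReal (Cl * τ ^ (1 / Cl) * ((2:ℝ) ^ (-j)) ^ n)

/-- A cube of the lattice, recorded together with its generation. -/
abbrev Cube (n : ℕ) : Type := ℤ × Set (Euc (n+1))

/-- Membership of a (generation, cube) pair in the lattice. -/
def DSLattice.mem {n : ℕ} {F : Set (Euc (n+1))} {μ : Measure (Euc (n+1))} {Cl : ℝ}
    (L : DSLattice n F μ Cl) (q : Cube n) : Prop := q.2 ∈ L.cube q.1

/-- Side length `ℓ(Q) = 2^{-j}` of a cube of generation `j`. -/
def sideLen {n : ℕ} (q : Cube n) : ℝ := (2:ℝ) ^ (-q.1)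

/-- The ball `t·B_Q = B(z_Q, t · 4 ℓ(Q))` associated to the cube `q`. -/
def cubeBall {n : ℕ} {F : Set (Euc (n+1))} {μ : Measure (Euc (n+1))} {Cl : ℝ}
    (L : DSLattice n F μ Cl) (t : ℝ) (q : Cube n) : Set (Euc (n+1)) :=
  ball (L.center q.2) (t * (4 * sideLen q))

/-- The dilated cube `λQ = {x ∈ F : dist(x,Q) ≤ (λ-1) ℓ(Q)}`. -/
def dilCube {n : ℕ} (F : Set (Euc (n+1))) (lam : ℝ) (q : Cube n) : Set (Euc (n+1)) :=
  {x ∈ F | infDist x q.2 ≤ (lam - 1) * sideLen q}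

/-- The bilateral beta coefficient `bβ_F(B(x,r))`: infimum over affine `n`-planes `L`
meeting `B(x,r)` of `r⁻¹ (sup_{y ∈ F ∩ B} dist(y,L) + sup_{y ∈ L ∩ B} dist(y,F))`. -/
def bbeta (n : ℕ) (F : Set (Euc (n+1))) (x : Euc (n+1)) (r : ℝ) : ℝ :=
  sInf {t | ∃ L : AffineSubspace ℝ (Euc (n+1)),
    Module.finrank ℝ L.direction = n ∧ ((L : Set (Euc (n+1))) ∩ ball x r).Nonempty ∧
    t = r⁻¹ * ((⨆ y ∈ F ∩ ball x r, infDist y (L : Set (Euc (n+1)))) +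
      ⨆ y ∈ (L : Set (Euc (n+1))) ∩ ball x r, infDist y F)}

/-- `q` belongs to `D_μ(R)`: a lattice cube contained in `R` of generation at least that
of `R`. -/
def InD {n : ℕ} {F : Set (Euc (n+1))} {μ : Measure (Euc (n+1))} {Cl : ℝ}
    (L : DSLattice n F μ Cl) (R q : Cube n) : Prop :=
  L.mem q ∧ q.2 ⊆ R.2 ∧ R.1 ≤ q.1

section Corona
variable {n : ℕ} {F : Set (Euc (n+1))} {μ : Measure (Euc (n+1))} {Cl : ℝ}

/-- The harmonic-measure density `ω^p(λQ)/μ(λQ)` of the dilated cube `λQ`. -/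
def dens (Ω : Set (Euc (n+1))) (μ : Measure (Euc (n+1))) (p : Euc (n+1)) (lam : ℝ)
    (q : Cube n) : ℝ :=
  hMeasure Ω p (dilCube (frontier Ω) lam q) / (μ (dilCube (frontier Ω) lam q)).toReal

/-- Being a high density cube (before maximality): `ω^p(2Q)/μ(2Q) ≥ A ω^p(2R₀)/μ(2R₀)`. -/
def HDcond (Ω : Set (Euc (n+1))) (μ : Measure (Euc (n+1))) (L : DSLattice n F μ Cl)
    (p : Euc (n+1)) (R₀ : Cube n) (A : ℝ) (q : Cube n) : Prop :=
  L.mem q ∧ q.2 ⊆ R₀.2 ∧ A * dens Ω μ p 2 R₀ ≤ dens Ω μ p 2 q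

/-- Being a low density cube (before maximality): `ω^p(Q)/μ(Q) ≤ A⁻¹ ω^p(R₀)/μ(R₀)`. -/
def LDcond (Ω : Set (Euc (n+1))) (μ : Measure (Euc (n+1))) (L : DSLattice n F μ Cl)
    (p : Euc (n+1)) (R₀ : Cube n) (A : ℝ) (q : Cube n) : Prop :=
  L.mem q ∧ q.2 ⊆ R₀.2 ∧
    hMeasure Ω p q.2 / (μ q.2).toReal ≤ A⁻¹ * (hMeasure Ω p R₀.2 / (μ R₀.2).toReal)

/-- Maximal cubes of the lattice satisfying a given property. -/
def MaximalWith (L : DSLattice n F μ Cl) (P : Cube n → Prop) (q : Cube n) : Prop :=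
  P q ∧ ∀ q' : Cube n, L.mem q' → q'.1 < q.1 → q.2 ⊆ q'.2 → ¬ P q'

/-- The family `HD` of maximal high density cubes contained in `R₀`. -/
def HDfam (Ω : Set (Euc (n+1))) (μ : Measure (Euc (n+1))) (L : DSLattice n F μ Cl)
    (p : Euc (n+1)) (R₀ : Cube n) (A : ℝ) : Set (Cube n) :=
  {q | MaximalWith L (HDcond Ω μ L p R₀ A) q}

/-- The family `LD` of maximal low density cubes contained in `R₀`. -/
def LDfam (Ω : Set (Euc (n+1))) (μ : Measure (Euc (n+1))) (L : DSLattice n F μ Cl)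
    (p : Euc (n+1)) (R₀ : Cube n) (A : ℝ) : Set (Cube n) :=
  {q | MaximalWith L (LDcond Ω μ L p R₀ A) q}

/-- `B_H`, the union of the high density cubes. -/
def BHset (Ω : Set (Euc (n+1))) (μ : Measure (Euc (n+1))) (L : DSLattice n F μ Cl)
    (p : Euc (n+1)) (R₀ : Cube n) (A : ℝ) : Set (Euc (n+1)) :=
  ⋃ q ∈ HDfam Ω μ L p R₀ A, q.2

/-- `B_L`, the union of the low density cubes. -/
def BLset (Ω : Set (Euc (n+1))) (μ : Measure (Euc (n+1))) (L : DSLattice n F μ Cl)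
    (p : Euc (n+1)) (R₀ : Cube n) (A : ℝ) : Set (Euc (n+1)) :=
  ⋃ q ∈ LDfam Ω μ L p R₀ A, q.2

/-- The family `G` of cubes of `D_μ(R₀)` not contained in any high or low density cube. -/
def Gfam (Ω : Set (Euc (n+1))) (μ : Measure (Euc (n+1))) (L : DSLattice n F μ Cl)
    (p : Euc (n+1)) (R₀ : Cube n) (A : ℝ) : Set (Cube n) :=
  {q | InD L R₀ q ∧
    ∀ q' ∈ HDfam Ω μ L p R₀ A ∪ LDfam Ω μ L p R₀ A, ¬ q.2 ⊆ q'.2}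

/-- `bβ(Q) := bβ_{∂Ω}(100 B_Q)`. -/
def bbetaQ (n : ℕ) {F : Set (Euc (n+1))} {μ : Measure (Euc (n+1))} {Cl : ℝ}
    (L : DSLattice n F μ Cl) (G : Set (Euc (n+1))) (q : Cube n) : ℝ :=
  bbeta n G (L.center q.2) (100 * (4 * sideLen q))

/-- `q'` is the dyadic parent of `q`. -/
def IsParent (L : DSLattice n F μ Cl) (q' q : Cube n) : Prop :=
  L.mem q' ∧ q'.1 = q.1 - 1 ∧ q.2 ⊆ q'.2

/-- The stopping condition for the corona decomposition: `Q ∉ G` or `bβ(Q̂) > ε`. -/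
def StopBad (Ω : Set (Euc (n+1))) (μ : Measure (Euc (n+1))) (L : DSLattice n F μ Cl)
    (p : Euc (n+1)) (R₀ : Cube n) (A ε : ℝ) (q : Cube n) : Prop :=
  q ∉ Gfam Ω μ L p R₀ A ∨ ∃ q', IsParent L q' q ∧ ε < bbetaQ n L (frontier Ω) q'

/-- `Stop(R)`: the maximal cubes of `D_μ(R) \ {R}` satisfying the stopping condition. -/
def StopFam (Ω : Set (Euc (n+1))) (μ : Measure (Euc (n+1))) (L : DSLattice n F μ Cl)
    (p : Euc (n+1)) (R₀ : Cube n) (A ε : ℝ) (R : Cube n) : Set (Cube n) :=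
  {q | L.mem q ∧ q.2 ⊆ R.2 ∧ R.1 < q.1 ∧ StopBad Ω μ L p R₀ A ε q ∧
    ∀ q' : Cube n, L.mem q' → q'.2 ⊆ R.2 → R.1 < q'.1 → q'.1 < q.1 → q.2 ⊆ q'.2 →
      ¬ StopBad Ω μ L p R₀ A ε q'}

/-- `Tree(R)`: the cubes of `D_μ(R)` not contained in any cube from `Stop(R)`. -/
def TreeFam (Ω : Set (Euc (n+1))) (μ : Measure (Euc (n+1))) (L : DSLattice n F μ Cl)
    (p : Euc (n+1)) (R₀ : Cube n) (A ε : ℝ) (R : Cube n) : Set (Cube n) :=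
  {q | InD L R q ∧ ∀ s ∈ StopFam Ω μ L p R₀ A ε R, ¬ q.2 ⊆ s.2}

/-- The generations `Top_k` of the corona decomposition. -/
def TopFam (Ω : Set (Euc (n+1))) (μ : Measure (Euc (n+1))) (L : DSLattice n F μ Cl)
    (p : Euc (n+1)) (R₀ : Cube n) (A ε : ℝ) : ℕ → Set (Cube n)
  | 0 => {q | q ∈ Gfam Ω μ L p R₀ A ∧ q.1 = R₀.1 + 10}
  | (k+1) => {q | ∃ R ∈ TopFam Ω μ L p R₀ A ε k,
      q ∈ StopFam Ω μ L p R₀ A ε R ∧ q ∈ Gfam Ω μ L p R₀ A}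

/-- `Top := ⋃_k Top_k`. -/
def TopAll (Ω : Set (Euc (n+1))) (μ : Measure (Euc (n+1))) (L : DSLattice n F μ Cl)
    (p : Euc (n+1)) (R₀ : Cube n) (A ε : ℝ) : Set (Cube n) :=
  {q | ∃ k : ℕ, q ∈ TopFam Ω μ L p R₀ A ε k}

/-- `Tree^{(N)}(R)`: cubes of `Tree(R)` of side length larger than `2^{-N} ℓ(R₀)`. -/
def TreeN (Ω : Set (Euc (n+1))) (μ : Measure (Euc (n+1))) (L : DSLattice n F μ Cl)
    (p : Euc (n+1)) (R₀ : Cube n) (A ε : ℝ) (N : ℕ) (R : Cube n) : Set (Cube n) :=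
  {q | q ∈ TreeFam Ω μ L p R₀ A ε R ∧ q.1 < R₀.1 + N}

/-- `Top_b^{(N)}`: the cubes `R` of `Top` of side length larger than `2^{-N} ℓ(R₀)` with
`Tree(R) ≠ {R}`. -/
def TopbN (Ω : Set (Euc (n+1))) (μ : Measure (Euc (n+1))) (L : DSLattice n F μ Cl)
    (p : Euc (n+1)) (R₀ : Cube n) (A ε : ℝ) (N : ℕ) : Set (Cube n) :=
  {R | R ∈ TopAll Ω μ L p R₀ A ε ∧ R.1 < R₀.1 + N ∧
    ∃ q ∈ TreeFam Ω μ L p R₀ A ε R, q ≠ R}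

end Corona

/-!
Harmonic measure is only available as an upper Perron solution, so it is monotone and finitely
subadditive, while additivity has to be earned. Compactly supported `C²` data `φ` are resolutive:
with `w = (1 + |x|²) ^ (-1/2)`, whose Laplacian is strictly negative in dimension at least `3`, both
`M w` and `φ + M w` are superharmonic for large `M`, and the lower envelope of all superharmonic
functions obtained by lowering such data inside compact sets is harmonic, which identifies the upper
and lower solutions. Bump functions then show that sets contained in balls whose doubles are
disjoint have total harmonic measure at most `1`.

By Vitali covering, the high density cubes have total surface measure at most a constant times
`A⁻¹ μ(R₀)`, hence small harmonic measure by the weak-`A∞` condition. Finitely many low density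
cubes carry at most `A⁻¹ ω(R₀)`, and the remaining ones have small surface measure. So `G₀` keeps a
definite part of `ω(R₀)`, and by the weak-`A∞` condition its surface measure cannot be small.
-/

open scoped InnerProductSpace Laplacian

section MeanValue

lemma integral_fderiv_mul_of_lipschitz {E : Type*} [NormedAddCommGroup E] [NormedSpace ℝ E]
    [FiniteDimensional ℝ E] [MeasurableSpace E] [BorelSpace E] {μ : Measure E}
    [μ.IsAddHaarMeasure] {f w : E → ℝ} {C : NNReal} (hf : ContDiff ℝ 1 f)
    (hw : LipschitzWith C w) (hw₀ : HasCompactSupport w) (v : E) :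
    ∫ y, fderiv ℝ f y v * w y ∂μ = -∫ y, lineDeriv ℝ w y v * f y ∂μ := by
  obtain ⟨R, hR, hwR⟩ := hw₀.isCompact.isBounded.subset_ball_lt 0 0
  let χ : ContDiffBump (0 : E) := ⟨R, R + 1, hR, by linarith⟩
  obtain ⟨K, hK⟩ : ∃ K, LipschitzWith K fun y => χ y * f y :=
    (χ.contDiff.mul hf).lipschitzWith_of_hasCompactSupport
      χ.hasCompactSupport.mul_right one_ne_zero
  have hχ : ∀ y ∈ tsupport w, (fun z => χ z * f z) =ᶠ[𝓝 y] f := fun y hy => by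
    filter_upwards [isOpen_ball.mem_nhds (hwR hy)] with z hz
    rw [χ.one_of_mem_closedBall (ball_subset_closedBall hz), one_mul]
  have hw' : ∀ y ∉ tsupport w, lineDeriv ℝ w y v = 0 := fun y hy => by
    rw [(notMem_tsupport_iff_eventuallyEq.mp hy).lineDeriv_eq]
    simp [lineDeriv]
  calc ∫ y, fderiv ℝ f y v * w y ∂μ
      = ∫ y, lineDeriv ℝ (fun z => χ z * f z) y v * w y ∂μ := by
        refine integral_congr_ae (.of_forall fun y => ?_)
        by_cases hy : y ∈ tsupport w
        · simp only [(hχ y hy).lineDeriv_eq,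
            ((hf.differentiable one_ne_zero) y).lineDeriv_eq_fderiv]
        · simp [image_eq_zero_of_notMem_tsupport hy]
    _ = ∫ y, lineDeriv ℝ w y (-v) * (χ y * f y) ∂μ := hK.integral_lineDeriv_mul_eq hw hw₀ v
    _ = -∫ y, lineDeriv ℝ w y v * f y ∂μ := by
        rw [← integral_neg]
        refine integral_congr_ae (.of_forall fun y => ?_)
        by_cases hy : y ∈ tsupport w
        · simp only [lineDeriv_neg, neg_mul, (hχ y hy).eq_of_nhds]
        · simp [lineDeriv_neg, hw' y hy]

/-- The truncated paraboloid `(r² - |y - x|²)⁺ / 2`, whose gradient on `ball x r` is `x - y`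
in an inner product space. -/
def paraboloid {X : Type*} [PseudoMetricSpace X] (x : X) (r : ℝ) (y : X) : ℝ :=
  (r ^ 2 - min (dist y x) r ^ 2) / 2

variable {X : Type*} [PseudoMetricSpace X]

lemma paraboloid_of_mem_closedBall {x y : X} {r : ℝ} (hy : y ∈ closedBall x r) :
    paraboloid x r y = (r ^ 2 - dist y x ^ 2) / 2 := by
  rw [paraboloid, min_eq_left (mem_closedBall.mp hy)]

lemma paraboloid_of_notMem_ball {x y : X} {r : ℝ} (hy : y ∉ ball x r) :
    paraboloid x r y = 0 := by
  rw [paraboloid, min_eq_right (by simpa using hy), sub_self, zero_div]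

lemma paraboloid_nonneg {x y : X} {r : ℝ} (hr : 0 ≤ r) : 0 ≤ paraboloid x r y := by
  have := pow_le_pow_left₀ (le_min dist_nonneg hr) (min_le_right (dist y x) r) 2
  unfold paraboloid
  linarith

lemma hasCompactSupport_paraboloid [ProperSpace X] (x : X) (r : ℝ) :
    HasCompactSupport (paraboloid x r) :=
  .intro (isCompact_closedBall x r) fun _ hy =>
    paraboloid_of_notMem_ball fun h => hy (ball_subset_closedBall h)

lemma lipschitzWith_paraboloid (x : X) {r : ℝ} (hr : 0 ≤ r) :
    LipschitzWith r.toNNReal (paraboloid x r) := by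
  refine .of_dist_le_mul fun y z => ?_
  have hm : |min (dist y x) r - min (dist z x) r| ≤ dist y z :=
    (abs_min_sub_min_le_max _ _ _ _).trans (by
      simpa using abs_dist_sub_le y z x)
  have hs : |min (dist y x) r + min (dist z x) r| ≤ 2 * r := by
    rw [abs_of_nonneg (add_nonneg (le_min dist_nonneg hr) (le_min dist_nonneg hr))]
    linarith [min_le_right (dist y x) r, min_le_right (dist z x) r]
  have hyz : paraboloid x r y - paraboloid x r z =
      -((min (dist y x) r + min (dist z x) r) * (min (dist y x) r - min (dist z x) r)) / 2 := by
    unfold paraboloid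
    ring
  rw [Real.dist_eq, hyz, abs_div, abs_neg, abs_mul, Real.coe_toNNReal r hr, abs_two]
  have := mul_le_mul hs hm (abs_nonneg _) (by positivity)
  linarith

variable {E : Type*} [NormedAddCommGroup E] [InnerProductSpace ℝ E]

lemma lineDeriv_paraboloid {x y : E} {r : ℝ} (hy : y ∈ ball x r) (v : E) :
    lineDeriv ℝ (paraboloid x r) y v = -inner ℝ (y - x) v := by
  have hw : paraboloid x r =ᶠ[𝓝 y] fun z => (r ^ 2 - ‖z - x‖ ^ 2) / 2 := by
    filter_upwards [isOpen_ball.mem_nhds hy] with z hz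
    rw [paraboloid_of_mem_closedBall (ball_subset_closedBall hz), dist_eq_norm]
  have hd : HasFDerivAt (fun z => (r ^ 2 - ‖z - x‖ ^ 2) / 2) (-innerSL ℝ (y - x)) y := by
    have := ((((hasFDerivAt_id y).sub_const x).norm_sq).const_sub (r ^ 2)).mul_const (1 / 2 : ℝ)
    refine (this.congr_fderiv ?_).congr_of_eventuallyEq (.of_forall fun z => by
      simp [div_eq_mul_inv])
    ext v
    simp
  rw [hw.lineDeriv_eq, (hd.hasLineDerivAt v).lineDeriv, _root_.neg_apply,
    innerSL_apply_apply]

lemma lineDeriv_paraboloid_eq_zero {x y : E} {r : ℝ} (hy : y ∉ closedBall x r) (v : E) :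
    lineDeriv ℝ (paraboloid x r) y v = 0 := by
  have hw : paraboloid x r =ᶠ[𝓝 y] fun _ => 0 := by
    filter_upwards [isClosed_closedBall.isOpen_compl.mem_nhds hy] with z hz
    exact paraboloid_of_notMem_ball fun h => hz (ball_subset_closedBall h)
  rw [hw.lineDeriv_eq]
  simp [lineDeriv]

variable [FiniteDimensional ℝ E]

lemma laplacian_eq_sum_fderiv {ι : Type*} [Fintype ι] (e : OrthonormalBasis ι ℝ E) {f : E → ℝ}
    (hf : ContDiff ℝ 2 f) (x : E) :
    Δ f x = ∑ i, fderiv ℝ (fun y => fderiv ℝ f y (e i)) x (e i) := by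
  rw [InnerProductSpace.laplacian_eq_iteratedFDeriv_orthonormalBasis f e]
  refine Finset.sum_congr rfl fun i _ => ?_
  have hd := (hf.fderiv_right (m := 1) le_rfl).differentiable one_ne_zero x
  rw [iteratedFDeriv_two_apply, fderiv_clm_apply hd (differentiableAt_const _)]
  simp

variable [MeasurableSpace E] [BorelSpace E] {μ : Measure E} [μ.IsAddHaarMeasure]

lemma setIntegral_ball_inner_mul {g : E → ℝ} (hg : ContDiff ℝ 1 g) (x : E) {r : ℝ} (hr : 0 < r)
    (v : E) :
    ∫ y in ball x r, inner ℝ (y - x) v * g y ∂μ =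
      ∫ y in ball x r, paraboloid x r y * fderiv ℝ g y v ∂μ := by
  have key := integral_fderiv_mul_of_lipschitz (μ := μ) hg (lipschitzWith_paraboloid x hr.le)
    (hasCompactSupport_paraboloid x r) v
  have hs : ∀ᵐ y ∂μ, y ∉ sphere x r :=
    measure_eq_zero_iff_ae_notMem.mp (Measure.addHaar_sphere_of_ne_zero μ x hr.ne')
  rw [← integral_neg] at key
  rw [← integral_indicator measurableSet_ball, ← integral_indicator measurableSet_ball]
  calc _ = ∫ y, -(lineDeriv ℝ (paraboloid x r) y v * g y) ∂μ := by
        refine integral_congr_ae ?_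
        filter_upwards [hs] with y hy
        by_cases hyb : y ∈ ball x r
        · rw [indicator_of_mem hyb, lineDeriv_paraboloid hyb, neg_mul, neg_neg]
        · have : y ∉ closedBall x r := fun h => by
            rw [← ball_union_sphere] at h
            exact h.elim hyb hy
          rw [indicator_of_notMem hyb, lineDeriv_paraboloid_eq_zero this, zero_mul, neg_zero]
    _ = _ := by
        rw [← key]
        refine integral_congr_ae (.of_forall fun y => ?_)
        by_cases hyb : y ∈ ball x r
        · simp only [indicator_of_mem hyb, mul_comm]
        · simp only [indicator_of_notMem hyb, paraboloid_of_notMem_ball hyb, mul_zero]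

lemma integrableOn_ball_of_continuousOn {X : Type*} [MetricSpace X] [ProperSpace X]
    [MeasurableSpace X] [OpensMeasurableSpace X] {μ : Measure X} [IsFiniteMeasureOnCompacts μ]
    {f : X → ℝ} {x : X} {r : ℝ} (hf : ContinuousOn f (closedBall x r)) :
    IntegrableOn f (ball x r) μ :=
  (hf.integrableOn_compact (isCompact_closedBall x r)).mono_set ball_subset_closedBall

lemma setIntegral_ball_fderiv_sub {f : E → ℝ} (hf : ContDiff ℝ 2 f) (x : E) {r : ℝ}
    (hr : 0 < r) :
    ∫ y in ball x r, fderiv ℝ f y (y - x) ∂μ =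
      ∫ y in ball x r, paraboloid x r y * Δ f y ∂μ := by
  let e := stdOrthonormalBasis ℝ E
  have hf' : ContDiff ℝ 1 (fderiv ℝ f) := hf.fderiv_right le_rfl
  have hg : ∀ i, ContDiff ℝ 1 fun y => fderiv ℝ f y (e i) := fun i =>
    hf'.clm_apply contDiff_const
  have hw : Continuous (paraboloid x r) := (lipschitzWith_paraboloid x hr.le).continuous
  calc ∫ y in ball x r, fderiv ℝ f y (y - x) ∂μ
      = ∫ y in ball x r, ∑ i, inner ℝ (y - x) (e i) * fderiv ℝ f y (e i) ∂μ := by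
        refine integral_congr_ae (.of_forall fun y => ?_)
        beta_reduce
        conv_lhs => enter [2]; rw [← e.sum_repr (y - x)]
        simp only [map_sum, map_smul, e.repr_apply_apply, real_inner_comm, smul_eq_mul]
    _ = ∑ i, ∫ y in ball x r, paraboloid x r y * fderiv ℝ (fun z => fderiv ℝ f z (e i)) y (e i)
          ∂μ := by
        rw [integral_finsetSum _ fun i _ => ?_]
        · exact Finset.sum_congr rfl fun i _ => setIntegral_ball_inner_mul (hg i) x hr (e i)
        · exact integrableOn_ball_of_continuousOn
            (Continuous.mul (by fun_prop) (hg i).continuous).continuousOn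
    _ = ∫ y in ball x r, paraboloid x r y * Δ f y ∂μ := by
        simp only [laplacian_eq_sum_fderiv e hf, Finset.mul_sum]
        rw [integral_finsetSum _ fun i _ => ?_]
        exact integrableOn_ball_of_continuousOn
          (hw.mul (((hg i).continuous_fderiv one_ne_zero).clm_apply continuous_const)).continuousOn

lemma setIntegral_ball_eq_pow_smul (f : E → ℝ) (x : E) {r : ℝ} (hr : 0 < r) :
    ∫ y in ball x r, f y ∂μ =
      r ^ Module.finrank ℝ E * ∫ y in ball 0 1, f (x + r • y) ∂μ := by
  rw [Measure.setIntegral_comp_smul_of_pos μ (fun y => f (x + y)) _ hr, smul_unitBall_of_pos hr,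
    smul_eq_mul, mul_inv_cancel_left₀ (by positivity),
    ← (measurePreserving_add_left μ x).setIntegral_preimage_emb
      (measurableEmbedding_addLeft x)]
  simp

lemma setAverage_ball_eq (f : E → ℝ) (x : E) {r : ℝ} (hr : 0 < r) :
    ⨍ y in ball x r, f y ∂μ = ⨍ y in ball 0 1, f (x + r • y) ∂μ := by
  rw [setAverage_eq, setAverage_eq, setIntegral_ball_eq_pow_smul f x hr, measureReal_def,
    Measure.addHaar_ball_of_pos μ x hr, ENNReal.toReal_mul, ENNReal.toReal_ofReal (by positivity),
    ← measureReal_def, smul_eq_mul, smul_eq_mul, mul_inv, ← mul_assoc]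
  congr 1
  field_simp

lemma hasDerivAt_setIntegral_ball {f : E → ℝ} (hf : ContDiff ℝ 1 f) (x : E) (s : ℝ) :
    HasDerivAt (fun s : ℝ => ∫ y in ball 0 1, f (x + s • y) ∂μ)
      (∫ y in ball 0 1, fderiv ℝ f (x + s • y) y ∂μ) s := by
  obtain ⟨C, hC⟩ := (isCompact_closedBall x (|s| + 1)).exists_bound_of_continuousOn
    (hf.continuous_fderiv one_ne_zero).continuousOn
  have : IsFiniteMeasure (μ.restrict (ball (0 : E) 1)) :=
    isFiniteMeasure_restrict.mpr measure_ball_lt_top.ne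
  refine (hasDerivAt_integral_of_dominated_loc_of_deriv_le (μ := μ.restrict (ball 0 1))
    (F := fun (t : ℝ) y => f (x + t • y)) (F' := fun t y => fderiv ℝ f (x + t • y) y)
    (bound := fun _ => C) (ball_mem_nhds s one_pos) (.of_forall fun t => ?_) ?_ ?_ ?_
    (integrable_const C) ?_).2
  · exact (hf.continuous.comp (by fun_prop : Continuous fun y : E => x + t • y)
      ).aestronglyMeasurable
  · exact integrableOn_ball_of_continuousOn (hf.continuous.comp (by fun_prop)).continuousOn
  · exact (((hf.continuous_fderiv one_ne_zero).comp (by fun_prop)).clm_apply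
      continuous_id).aestronglyMeasurable
  · filter_upwards [ae_restrict_mem measurableSet_ball] with y hy t ht
    have hy1 : ‖y‖ ≤ 1 := (mem_ball_zero_iff.mp hy).le
    have ht1 : |t| ≤ |s| + 1 := by
      rw [mem_ball, Real.dist_eq] at ht
      linarith [abs_sub_abs_le_abs_sub t s]
    have hmem : x + t • y ∈ closedBall x (|s| + 1) := by
      rw [mem_closedBall, dist_self_add_left, norm_smul, Real.norm_eq_abs]
      nlinarith [abs_nonneg t, norm_nonneg y]
    exact (ContinuousLinearMap.le_opNorm _ _).trans
      ((mul_le_of_le_one_right (norm_nonneg _) hy1).trans (hC _ hmem))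
  · refine .of_forall fun y t _ => ?_
    have hline : HasDerivAt (fun t : ℝ => x + t • y) y t := by
      simpa using ((hasDerivAt_id t).smul_const y).const_add x
    exact ((hf.differentiable one_ne_zero) (x + t • y)).hasFDerivAt.comp_hasDerivAt t hline

theorem setAverage_ball_le_of_laplacian_nonpos {f : E → ℝ} (hf : ContDiff ℝ 2 f) {x : E} {r : ℝ}
    (hr : 0 < r) (hΔ : ∀ y ∈ ball x r, Δ f y ≤ 0) : ⨍ y in ball x r, f y ∂μ ≤ f x := by
  let φ : ℝ → ℝ := fun s => ∫ y in ball 0 1, f (x + s • y) ∂μ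
  have hφ : ∀ s, HasDerivAt φ (∫ y in ball 0 1, fderiv ℝ f (x + s • y) y ∂μ) s :=
    hasDerivAt_setIntegral_ball (hf.of_le one_le_two) x
  have hφ' : ∀ s ∈ Ioo 0 r, ∫ y in ball 0 1, fderiv ℝ f (x + s • y) y ∂μ ≤ 0 := fun s hs => by
    have hIBP := setIntegral_ball_fderiv_sub (μ := μ) hf x hs.1
    have hneg : ∫ y in ball x s, paraboloid x s y * Δ f y ∂μ ≤ 0 :=
      setIntegral_nonpos measurableSet_ball fun y hy => mul_nonpos_of_nonneg_of_nonpos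
        (paraboloid_nonneg hs.1.le) (hΔ y (ball_subset_ball hs.2.le hy))
    rw [← hIBP, setIntegral_ball_eq_pow_smul _ x hs.1] at hneg
    simp only [add_sub_cancel_left, map_smul, smul_eq_mul, integral_const_mul] at hneg
    have := nonpos_of_mul_nonpos_right hneg (pow_pos hs.1 _)
    exact nonpos_of_mul_nonpos_right this hs.1
  have hanti : AntitoneOn φ (Icc 0 r) := by
    refine antitoneOn_of_deriv_nonpos (convex_Icc 0 r)
      (fun s _ => (hφ s).continuousAt.continuousWithinAt)
      (fun s _ => (hφ s).differentiableAt.differentiableWithinAt) fun s hs => ?_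
    rw [interior_Icc] at hs
    exact (hφ s).deriv.trans_le (hφ' s hs)
  have hle : φ r ≤ μ.real (ball 0 1) * f x := by
    simpa [φ] using hanti (left_mem_Icc.mpr hr.le) (right_mem_Icc.mpr hr.le) hr.le
  have hpos : 0 < μ.real (ball (0 : E) 1) :=
    ENNReal.toReal_pos (measure_ball_pos μ 0 one_pos).ne' measure_ball_lt_top.ne
  rw [setAverage_ball_eq f x hr, setAverage_eq, smul_eq_mul, inv_mul_le_iff₀ hpos]
  exact hle

theorem setAverage_ball_eq_of_laplacian_eq_zero {f : E → ℝ} (hf : ContDiff ℝ 2 f) {x : E} {r : ℝ}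
    (hr : 0 < r) (hΔ : ∀ y ∈ ball x r, Δ f y = 0) : ⨍ y in ball x r, f y ∂μ = f x := by
  refine le_antisymm (setAverage_ball_le_of_laplacian_nonpos hf hr fun y hy => (hΔ y hy).le) ?_
  have hneg := setAverage_ball_le_of_laplacian_nonpos (μ := μ) (f := -f) hf.neg hr fun y hy => by
    rw [InnerProductSpace.laplacian_neg, Pi.neg_apply, hΔ y hy, neg_zero]
  simpa [average_neg] using hneg

end MeanValue

section SetAverage

variable {α : Type*} [MeasurableSpace α] {μ : Measure α} {s : Set α} {u v : α → ℝ}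

lemma setAverage_mono (hs : MeasurableSet s) (hu : IntegrableOn u s μ) (hv : IntegrableOn v s μ)
    (huv : ∀ y ∈ s, u y ≤ v y) : ⨍ y in s, u y ∂μ ≤ ⨍ y in s, v y ∂μ := by
  rw [setAverage_eq, setAverage_eq]
  exact smul_le_smul_of_nonneg_left (setIntegral_mono_on hu hv hs huv)
    (inv_nonneg.mpr measureReal_nonneg)

lemma setAverage_add (hu : IntegrableOn u s μ) (hv : IntegrableOn v s μ) :
    ⨍ y in s, (u y + v y) ∂μ = ⨍ y in s, u y ∂μ + ⨍ y in s, v y ∂μ := by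
  simp only [setAverage_eq, integral_add hu hv, smul_add]

lemma setAverage_const_mul (c : ℝ) : ⨍ y in s, c * u y ∂μ = c * ⨍ y in s, u y ∂μ := by
  simp only [setAverage_eq, integral_const_mul, smul_eq_mul, mul_left_comm]

lemma eqOn_of_setAverage_le [TopologicalSpace α] [OpensMeasurableSpace α] [μ.IsOpenPosMeasure]
    (hs : IsOpen s) (hμs : μ s ≠ ⊤) (hu : ContinuousOn u s) (hui : IntegrableOn u s μ) {a : ℝ}
    (hau : ∀ y ∈ s, a ≤ u y) (h : ⨍ y in s, u y ∂μ ≤ a) : EqOn u (fun _ => a) s := by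
  rcases s.eq_empty_or_nonempty with rfl | hne
  · exact eqOn_empty _ _
  have hμ : 0 < μ.real s := ENNReal.toReal_pos (hs.measure_pos μ hne).ne' hμs
  have hle : ∫ y in s, (u y - a) ∂μ ≤ 0 := by
    rw [setAverage_eq, smul_eq_mul, inv_mul_le_iff₀ hμ] at h
    rw [integral_sub hui (integrableOn_const hμs), setIntegral_const, smul_eq_mul]
    linarith
  have hnn : 0 ≤ᵐ[μ.restrict s] fun y => u y - a := by
    filter_upwards [ae_restrict_mem hs.measurableSet] with y hy using sub_nonneg.mpr (hau y hy)
  have hae := (integral_eq_zero_iff_of_nonneg_ae hnn (hui.sub (integrableOn_const hμs))).mp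
    (le_antisymm hle (integral_nonneg_of_ae hnn))
  refine Measure.eqOn_open_of_ae_eq (hae.mono fun y hy => ?_) hs hu continuousOn_const
  exact sub_eq_zero.mp hy

end SetAverage

section Superharmonic

variable {d : ℕ} {u v : Euc d → ℝ} {U : Set (Euc d)}

/-- Superharmonicity on `U`, tested like `SubharmonicOn` on all balls with closure in `U`. -/
def SuperharmonicOn (u : Euc d → ℝ) (U : Set (Euc d)) : Prop := SubharmonicOn (fun y => -u y) U

lemma superharmonicOn_iff : SuperharmonicOn u U ↔ ContinuousOn u U ∧
    ∀ x ∈ U, ∀ r : ℝ, 0 < r → closedBall x r ⊆ U → ⨍ y in ball x r, u y ≤ u x := by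
  simp only [SuperharmonicOn, SubharmonicOn, average_neg, neg_le_neg_iff]
  exact and_congr_left' ⟨fun h => h.neg.congr fun x _ => (neg_neg (u x)).symm,
    fun h => h.neg⟩

lemma harmonicOnS_iff :
    HarmonicOnS u U ↔ SuperharmonicOn u U ∧ SuperharmonicOn (fun y => -u y) U := by
  simp only [HarmonicOnS, SuperharmonicOn, neg_neg, and_comm]

lemma HarmonicOnS.superharmonicOn (h : HarmonicOnS u U) : SuperharmonicOn u U := h.2

lemma HarmonicOnS.superharmonicOn_neg (h : HarmonicOnS u U) :
    SuperharmonicOn (fun y => -u y) U := (harmonicOnS_iff.mp h).2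

lemma HarmonicOnS.neg (h : HarmonicOnS u U) : HarmonicOnS (fun y => -u y) U :=
  harmonicOnS_iff.mpr ⟨h.superharmonicOn_neg, by simpa only [neg_neg] using h.superharmonicOn⟩

lemma HarmonicOnS.setAverage_eq (h : HarmonicOnS u univ) (x : Euc d) {r : ℝ} (hr : 0 < r) :
    ⨍ y in ball x r, u y = u x :=
  le_antisymm ((superharmonicOn_iff.mp h.2).2 x trivial r hr (subset_univ _))
    (h.1.2 x trivial r hr (subset_univ _))

lemma HarmonicOnS.continuous (h : HarmonicOnS u univ) : Continuous u :=
  continuousOn_univ.mp h.1.1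

lemma harmonicOnS_univ_of_laplacian_eq_zero (hu : ContDiff ℝ 2 u) (h : ∀ x, Δ u x = 0) :
    HarmonicOnS u univ := by
  have hmv : ∀ x, ∀ r : ℝ, 0 < r → ⨍ y in ball x r, u y = u x := fun x r hr =>
    setAverage_ball_eq_of_laplacian_eq_zero hu hr fun y _ => h y
  refine ⟨⟨hu.continuous.continuousOn, fun x _ r hr _ => (hmv x r hr).ge⟩,
    superharmonicOn_iff.mpr ⟨hu.continuous.continuousOn, fun x _ r hr _ => (hmv x r hr).le⟩⟩

lemma superharmonicOn_univ_of_laplacian_nonpos (hu : ContDiff ℝ 2 u) (h : ∀ x, Δ u x ≤ 0) :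
    SuperharmonicOn u univ :=
  superharmonicOn_iff.mpr ⟨hu.continuous.continuousOn, fun _ _ _ hr _ =>
    setAverage_ball_le_of_laplacian_nonpos hu hr fun y _ => h y⟩

namespace SuperharmonicOn

lemma continuousOn (hu : SuperharmonicOn u U) : ContinuousOn u U := (superharmonicOn_iff.mp hu).1

lemma setAverage_le (hu : SuperharmonicOn u U) {x : Euc d} {r : ℝ} (hr : 0 < r)
    (hx : closedBall x r ⊆ U) : ⨍ y in ball x r, u y ≤ u x :=
  (superharmonicOn_iff.mp hu).2 x (hx (mem_closedBall_self hr.le)) r hr hx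

lemma integrableOn_ball (hu : SuperharmonicOn u U) {x : Euc d} {r : ℝ}
    (hx : closedBall x r ⊆ U) : IntegrableOn u (ball x r) :=
  integrableOn_ball_of_continuousOn (hu.continuousOn.mono hx)

lemma mono {V : Set (Euc d)} (hu : SuperharmonicOn u U) (h : V ⊆ U) : SuperharmonicOn u V :=
  superharmonicOn_iff.mpr ⟨hu.continuousOn.mono h, fun _ _ _ hr hx =>
    hu.setAverage_le hr (hx.trans h)⟩

protected lemma const (a : ℝ) : SuperharmonicOn (fun _ => a) U :=
  superharmonicOn_iff.mpr ⟨continuousOn_const, fun x _ _ hr _ =>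
    (setAverage_const (measure_ball_pos volume x hr).ne' measure_ball_lt_top.ne a).le⟩

lemma add (hu : SuperharmonicOn u U) (hv : SuperharmonicOn v U) :
    SuperharmonicOn (fun y => u y + v y) U :=
  superharmonicOn_iff.mpr ⟨hu.continuousOn.add hv.continuousOn, fun _ _ _ hr hx => by
    rw [setAverage_add (hu.integrableOn_ball hx) (hv.integrableOn_ball hx)]
    exact add_le_add (hu.setAverage_le hr hx) (hv.setAverage_le hr hx)⟩

lemma const_mul (hu : SuperharmonicOn u U) {a : ℝ} (ha : 0 ≤ a) :
    SuperharmonicOn (fun y => a * u y) U :=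
  superharmonicOn_iff.mpr ⟨continuousOn_const.mul hu.continuousOn, fun _ _ _ hr hx => by
    rw [setAverage_const_mul]
    exact mul_le_mul_of_nonneg_left (hu.setAverage_le hr hx) ha⟩

protected lemma min (hu : SuperharmonicOn u U) (hv : SuperharmonicOn v U) :
    SuperharmonicOn (fun y => min (u y) (v y)) U :=
  superharmonicOn_iff.mpr ⟨hu.continuousOn.inf hv.continuousOn, fun _ _ _ hr hx => by
    have hui := hu.integrableOn_ball hx
    have hvi := hv.integrableOn_ball hx
    exact le_min
      ((setAverage_mono measurableSet_ball (hui.inf hvi) hui fun _ _ => min_le_left _ _).trans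
        (hu.setAverage_le hr hx))
      ((setAverage_mono measurableSet_ball (hui.inf hvi) hvi fun _ _ => min_le_right _ _).trans
        (hv.setAverage_le hr hx))⟩

end SuperharmonicOn

lemma HarmonicOnS.const (a : ℝ) : HarmonicOnS (fun _ => a) U :=
  harmonicOnS_iff.mpr ⟨.const a, .const (-a)⟩

lemma HarmonicOnS.add (hu : HarmonicOnS u U) (hv : HarmonicOnS v U) :
    HarmonicOnS (fun y => u y + v y) U :=
  harmonicOnS_iff.mpr ⟨hu.superharmonicOn.add hv.superharmonicOn, by
    simpa only [neg_add] using hu.superharmonicOn_neg.add hv.superharmonicOn_neg⟩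

/-- The local form of superharmonicity: the mean value inequality holds on all sufficiently
small balls around each point. -/
def LocallySuperharmonicOn (u : Euc d → ℝ) (U : Set (Euc d)) : Prop :=
  ContinuousOn u U ∧ ∀ x ∈ U, ∀ᶠ r in 𝓝[>] (0 : ℝ), ⨍ y in ball x r, u y ≤ u x

lemma eventually_closedBall_subset {X : Type*} [PseudoMetricSpace X] {U : Set X} {x : X}
    (hU : U ∈ 𝓝 x) : ∀ᶠ r in 𝓝[>] (0 : ℝ), closedBall x r ⊆ U := by
  obtain ⟨δ, hδ, hδU⟩ := nhds_basis_closedBall.mem_iff.mp hU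
  filter_upwards [Ioo_mem_nhdsGT hδ] with r hr
  exact (closedBall_subset_closedBall hr.2.le).trans hδU

lemma SuperharmonicOn.eventually_setAverage_le (hu : SuperharmonicOn u U) {x : Euc d}
    (hU : U ∈ 𝓝 x) : ∀ᶠ r in 𝓝[>] (0 : ℝ), ⨍ y in ball x r, u y ≤ u x := by
  filter_upwards [eventually_closedBall_subset hU, self_mem_nhdsWithin] with r hr hr₀
  exact hu.setAverage_le hr₀ hr

lemma SuperharmonicOn.locally (hu : SuperharmonicOn u U) (hU : IsOpen U) :
    LocallySuperharmonicOn u U :=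
  ⟨hu.continuousOn, fun _ hx => hu.eventually_setAverage_le (hU.mem_nhds hx)⟩

lemma LocallySuperharmonicOn.mono {V : Set (Euc d)} (hu : LocallySuperharmonicOn u U)
    (h : V ⊆ U) : LocallySuperharmonicOn u V :=
  ⟨hu.1.mono h, fun x hx => hu.2 x (h hx)⟩

lemma LocallySuperharmonicOn.add (hU : IsOpen U) (hu : LocallySuperharmonicOn u U)
    (hv : LocallySuperharmonicOn v U) : LocallySuperharmonicOn (fun y => u y + v y) U := by
  refine ⟨hu.1.add hv.1, fun x hx => ?_⟩
  filter_upwards [hu.2 x hx, hv.2 x hx, eventually_closedBall_subset (hU.mem_nhds hx)]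
    with r hur hvr hr
  rw [setAverage_add (integrableOn_ball_of_continuousOn (hu.1.mono hr))
    (integrableOn_ball_of_continuousOn (hv.1.mono hr))]
  exact add_le_add hur hvr

theorem LocallySuperharmonicOn.le_of_le_on_diff [NeZero d] {K : Set (Euc d)} (hK : IsCompact K)
    (hU : IsOpen U) (hUK : U ⊆ K) (hu : LocallySuperharmonicOn u U) (huK : ContinuousOn u K)
    {m : ℝ} (hm : ∀ x ∈ K \ U, m ≤ u x) : ∀ x ∈ K, m ≤ u x := by
  rintro x hx
  obtain ⟨z, hz, hmin⟩ := hK.exists_isMinOn ⟨x, hx⟩ huK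
  refine le_trans ?_ (hmin hx)
  by_contra! hlt
  let M : Set (Euc d) := K ∩ u ⁻¹' {u z}
  have hMc : IsClosed M := huK.preimage_isClosed_of_isClosed hK.isClosed isClosed_singleton
  have hMU : M ⊆ U := fun y hy => by
    by_contra hyU
    exact (hm y ⟨hy.1, hyU⟩).not_gt (hy.2 ▸ hlt)
  have hMo : IsOpen M := isOpen_iff_mem_nhds.mpr fun y hy => by
    obtain ⟨r, ⟨havg, hr⟩, hr₀⟩ := (((hu.2 y (hMU hy)).and
      (eventually_closedBall_subset (hU.mem_nhds (hMU hy)))).and self_mem_nhdsWithin).exists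
    have hball : ball y r ⊆ K := (ball_subset_closedBall.trans hr).trans hUK
    have heq := eqOn_of_setAverage_le isOpen_ball measure_ball_lt_top.ne (huK.mono hball)
      (integrableOn_ball_of_continuousOn (hu.1.mono hr)) (fun w hw => hmin (hball hw))
      (havg.trans_eq hy.2)
    exact mem_of_superset (ball_mem_nhds y hr₀) fun w hw => ⟨hball hw, heq hw⟩
  have hMuniv : M = univ := IsClopen.eq_univ ⟨hMc, hMo⟩ ⟨z, hz, rfl⟩
  have : CompactSpace (Euc d) :=
    ⟨hK.of_isClosed_subset isClosed_univ (hMuniv ▸ inter_subset_left)⟩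
  exact not_compactSpace_iff.mpr inferInstance this

end Superharmonic

section HarmonicPolynomial

open MvPolynomial

lemma totalDegree_pderiv_le {σ R : Type*} [CommSemiring R] (i : σ) (p : MvPolynomial σ R) :
    (pderiv i p).totalDegree ≤ p.totalDegree - 1 := by
  classical
  conv_lhs => rw [p.as_sum, map_sum]
  refine totalDegree_finsetSum_le fun s hs => ?_
  rw [pderiv_monomial]
  by_cases hsi : s i = 0
  · simp [hsi]
  have hle : Finsupp.single i 1 ≤ s := by
    simpa [Finsupp.single_le_iff, Nat.one_le_iff_ne_zero] using hsi
  have hdeg : s.degree = (s - Finsupp.single i 1).degree + 1 := by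
    conv_lhs => rw [← tsub_add_cancel_of_le hle, map_add, Finsupp.degree_single]
  refine (totalDegree_monomial_le _ _).trans ?_
  have hs' : s.degree ≤ p.totalDegree := le_totalDegree hs
  change (s - Finsupp.single i 1).degree ≤ _
  omega

variable {d : ℕ}

lemma contDiff_eval {k : WithTop ℕ∞} (p : MvPolynomial (Fin d) ℝ) :
    ContDiff ℝ k fun x : Euc d => eval x.ofLp p := by
  induction p using MvPolynomial.induction_on with
  | C a => simpa using contDiff_const
  | add p q hp hq => simpa using hp.add hq
  | mul_X p i hp =>
    simp only [map_mul, eval_X]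
    exact hp.mul (by fun_prop)

lemma fderiv_eval (p : MvPolynomial (Fin d) ℝ) (x : Euc d) (i : Fin d) :
    fderiv ℝ (fun y : Euc d => eval y.ofLp p) x (EuclideanSpace.single i 1) =
      eval x.ofLp (pderiv i p) := by
  have hdiff (q : MvPolynomial (Fin d) ℝ) :
      DifferentiableAt ℝ (fun y : Euc d => eval y.ofLp q) x :=
    (contDiff_eval q).differentiable one_ne_zero x
  induction p using MvPolynomial.induction_on with
  | C a => simp
  | add p q hp hq =>
    simp only [map_add]
    rw [fderiv_fun_add (hdiff p) (hdiff q), ← hp, ← hq]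
    rfl
  | mul_X p j hp =>
    have hX : HasFDerivAt (fun y : Euc d => eval y.ofLp (X j : MvPolynomial (Fin d) ℝ))
        (EuclideanSpace.proj j : Euc d →L[ℝ] ℝ) x := by
      simpa using (EuclideanSpace.proj j : Euc d →L[ℝ] ℝ).hasFDerivAt
    simp only [map_mul]
    rw [fderiv_fun_mul (hdiff p) (hdiff (X j)), hX.fderiv]
    by_cases hji : j = i <;> simp [hp, hji, mul_comm]

/-- The Laplacian of polynomials, as a linear map. -/
def polyLaplacian (d : ℕ) : MvPolynomial (Fin d) ℝ →ₗ[ℝ] MvPolynomial (Fin d) ℝ :=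
  ∑ i, (pderiv i).toLinearMap ∘ₗ (pderiv i).toLinearMap

lemma laplacian_eval (p : MvPolynomial (Fin d) ℝ) (x : Euc d) :
    Δ (fun y : Euc d => eval y.ofLp p) x = eval x.ofLp (polyLaplacian d p) := by
  rw [laplacian_eq_sum_fderiv (EuclideanSpace.basisFun (Fin d) ℝ) (contDiff_eval p)]
  simp only [EuclideanSpace.basisFun_apply, fderiv_eval]
  simp [polyLaplacian]

lemma totalDegree_polyLaplacian_le (p : MvPolynomial (Fin d) ℝ) :
    (polyLaplacian d p).totalDegree ≤ p.totalDegree - 2 := by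
  simp only [polyLaplacian, LinearMap.sum_apply, LinearMap.comp_apply]
  refine totalDegree_finsetSum_le fun i _ => ?_
  have h₁ := totalDegree_pderiv_le i p
  have h₂ := totalDegree_pderiv_le i (pderiv i p)
  exact h₂.trans (by omega)

lemma eq_zero_of_eval_eq_zero_on_ball {p : MvPolynomial (Fin d) ℝ} {x₀ : Euc d} {R : ℝ}
    (hR : 0 < R) (hp : ∀ x ∈ ball x₀ R, eval x.ofLp p = 0) : p = 0 := by
  have hnhds : {y : Fin d → ℝ | WithLp.toLp 2 y ∈ ball x₀ R} ∈ 𝓝 x₀.ofLp :=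
    (PiLp.continuous_toLp 2 fun _ : Fin d => ℝ).continuousAt.preimage_mem_nhds
      (ball_mem_nhds x₀ hR)
  obtain ⟨ε, hε, hsub⟩ := Metric.nhds_basis_ball.mem_iff.mp hnhds
  refine funext_set (fun i => ball (x₀ i) ε) (fun i => ?_) fun y hy => ?_
  · rw [Real.ball_eq_Ioo]
    exact Ioo_infinite (by linarith)
  · rw [map_zero]
    exact hp _ (hsub (by rwa [ball_pi _ hε]))

lemma harmonicOnS_eval {p : MvPolynomial (Fin d) ℝ} (hp : polyLaplacian d p = 0) :
    HarmonicOnS (fun x : Euc d => eval x.ofLp p) univ :=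
  harmonicOnS_univ_of_laplacian_eq_zero (contDiff_eval p) fun x => by
    rw [laplacian_eval, hp, map_zero]

lemma HarmonicOnS.eqOn_zero_closedBall [NeZero d] {u : Euc d → ℝ} (hu : HarmonicOnS u univ)
    {x₀ : Euc d} {R : ℝ} (hsph : ∀ x ∈ sphere x₀ R, u x = 0) :
    ∀ x ∈ closedBall x₀ R, u x = 0 := by
  have hmin : ∀ v : Euc d → ℝ, SuperharmonicOn v univ → (∀ x ∈ sphere x₀ R, v x = 0) →
      ∀ x ∈ closedBall x₀ R, 0 ≤ v x := fun v hv hvs =>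
    ((hv.mono (subset_univ _)).locally isOpen_ball).le_of_le_on_diff
      (isCompact_closedBall x₀ R) isOpen_ball ball_subset_closedBall
      (hv.continuousOn.mono (subset_univ _))
      fun x hx => (hvs x (closedBall_sdiff_ball (x := x₀) ▸ hx)).ge
  exact fun x hx => le_antisymm
    (neg_nonneg.mp (hmin _ hu.superharmonicOn_neg (fun y hy => by simp [hsph y hy]) x hx))
    (hmin u hu.superharmonicOn hsph x hx)

/-- `R² - |X - x₀|²`, the quadratic polynomial vanishing on the sphere of center `x₀`. -/
def spherePoly (x₀ : Euc d) (R : ℝ) : MvPolynomial (Fin d) ℝ :=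
  C (R ^ 2) - ∑ i, (X i - C (x₀ i)) ^ 2

lemma eval_spherePoly (x₀ x : Euc d) (R : ℝ) :
    eval x.ofLp (spherePoly x₀ R) = R ^ 2 - dist x x₀ ^ 2 := by
  simp [spherePoly, EuclideanSpace.dist_eq, Real.sq_sqrt, Finset.sum_nonneg, sq_nonneg,
    Real.dist_eq]

lemma totalDegree_spherePoly_le (x₀ : Euc d) (R : ℝ) : (spherePoly x₀ R).totalDegree ≤ 2 := by
  refine (totalDegree_sub _ _).trans (max_le
    ((totalDegree_C _).le.trans zero_le_two) (totalDegree_finsetSum_le fun i _ => ?_))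
  have h : (X i - C (x₀ i) : MvPolynomial (Fin d) ℝ).totalDegree ≤ 1 :=
    (totalDegree_sub _ _).trans (max_le (totalDegree_X i).le (by simp))
  exact (totalDegree_pow _ _).trans (by omega)

lemma eq_zero_of_polyLaplacian_spherePoly_mul [NeZero d] (x₀ : Euc d) {R : ℝ} (hR : 0 < R)
    {q : MvPolynomial (Fin d) ℝ} (hq : polyLaplacian d (spherePoly x₀ R * q) = 0) : q = 0 := by
  refine eq_zero_of_eval_eq_zero_on_ball hR (x₀ := x₀) fun x hx => ?_
  have hsph : ∀ y ∈ sphere x₀ R, eval y.ofLp (spherePoly x₀ R * q) = 0 := fun y hy => by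
    rw [map_mul, eval_spherePoly, mem_sphere.mp hy, sub_self, zero_mul]
  have hx₀ := (harmonicOnS_eval hq).eqOn_zero_closedBall hsph x (ball_subset_closedBall hx)
  rw [map_mul, eval_spherePoly] at hx₀
  refine (mul_eq_zero.mp hx₀).resolve_left (sub_pos.mpr ?_).ne'
  exact pow_lt_pow_left₀ hx dist_nonneg two_ne_zero

-- The injective map `q ↦ Δ(sq)`, `s` vanishing on the sphere, preserves each degree bound, so it
-- is onto; subtracting from `p` the `sq` with `Δ(sq) = Δp` gives the harmonic polynomial.
lemma exists_polyLaplacian_eq_zero_eqOn_sphere [NeZero d] (x₀ : Euc d) {R : ℝ} (hR : 0 < R)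
    (p : MvPolynomial (Fin d) ℝ) : ∃ h : MvPolynomial (Fin d) ℝ, polyLaplacian d h = 0 ∧
      ∀ x ∈ sphere x₀ R, eval x.ofLp h = eval x.ofLp p := by
  let m := p.totalDegree
  let T : MvPolynomial (Fin d) ℝ →ₗ[ℝ] MvPolynomial (Fin d) ℝ :=
    polyLaplacian d ∘ₗ LinearMap.mulLeft ℝ (spherePoly x₀ R)
  have hT : ∀ q ∈ restrictTotalDegree (Fin d) ℝ m, T q ∈ restrictTotalDegree (Fin d) ℝ m := by
    intro q hq
    rw [mem_restrictTotalDegree] at hq ⊢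
    have h₁ := totalDegree_polyLaplacian_le (spherePoly x₀ R * q)
    have h₂ := totalDegree_mul (spherePoly x₀ R) q
    have h₃ := totalDegree_spherePoly_le x₀ R
    exact h₁.trans (by omega)
  have hinj : Function.Injective (T.restrict hT) :=
    (injective_iff_map_eq_zero _).mpr fun q hq => Subtype.ext
      (eq_zero_of_polyLaplacian_spherePoly_mul x₀ hR (congrArg Subtype.val hq))
  have hp : polyLaplacian d p ∈ restrictTotalDegree (Fin d) ℝ m :=
    (mem_restrictTotalDegree _ _ _).mpr ((totalDegree_polyLaplacian_le p).trans (by omega))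
  obtain ⟨q, hq⟩ := (LinearMap.injective_iff_surjective.mp hinj) ⟨_, hp⟩
  refine ⟨p - spherePoly x₀ R * q, ?_, fun x hx => ?_⟩
  · rw [map_sub, sub_eq_zero]
    exact (congrArg Subtype.val hq).symm
  · rw [map_sub, map_mul, eval_spherePoly, mem_sphere.mp hx, sub_self, zero_mul, sub_zero]

lemma exists_eval_near_of_continuousOn {K : Set (Euc d)} (hK : IsCompact K) {f : Euc d → ℝ}
    (hf : ContinuousOn f K) {ε : ℝ} (hε : 0 < ε) :
    ∃ p : MvPolynomial (Fin d) ℝ, ∀ x ∈ K, |eval x.ofLp p - f x| ≤ ε := by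
  have : CompactSpace K := isCompact_iff_compactSpace.mp hK
  let coord : Fin d → C(K, ℝ) := fun i => ⟨fun x => x.1 i, by fun_prop⟩
  have heval : ∀ (p : MvPolynomial (Fin d) ℝ) (x : K), aeval coord p x = eval x.1.ofLp p := by
    intro p x
    induction p using MvPolynomial.induction_on <;> simp_all [coord]
  let A : Subalgebra ℝ C(K, ℝ) := (aeval coord).range
  have hsep : A.SeparatesPoints := fun x y hxy => by
    obtain ⟨i, hi⟩ : ∃ i, x.1 i ≠ y.1 i := by
      by_contra! h
      exact hxy (Subtype.ext (PiLp.ext h))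
    exact ⟨_, ⟨coord i, ⟨X i, aeval_X _ i⟩, rfl⟩, hi⟩
  obtain ⟨⟨_, p, rfl⟩, hp⟩ :=
    ContinuousMap.exists_mem_subalgebra_near_continuous_of_separatesPoints A hsep
      (K.domRestrict f) hf.domRestrict ε hε
  exact ⟨p, fun x hx => heval p ⟨x, hx⟩ ▸ (hp ⟨x, hx⟩).le⟩

theorem exists_harmonicOnS_near_on_sphere [NeZero d] {f : Euc d → ℝ} {x₀ : Euc d} {R : ℝ}
    (hR : 0 < R) (hf : ContinuousOn f (sphere x₀ R)) {ε : ℝ} (hε : 0 < ε) :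
    ∃ P : Euc d → ℝ, HarmonicOnS P univ ∧ ∀ x ∈ sphere x₀ R, |P x - f x| ≤ ε := by
  obtain ⟨p, hp⟩ := exists_eval_near_of_continuousOn (isCompact_sphere x₀ R) hf hε
  obtain ⟨h, hh, heq⟩ := exists_polyLaplacian_eq_zero_eqOn_sphere x₀ hR p
  exact ⟨_, harmonicOnS_eval hh, fun x hx => (heq x hx).symm ▸ hp x hx⟩

end HarmonicPolynomial

section LocalToGlobal

lemma continuousOn_setIntegral_ball {E : Type*} [NormedAddCommGroup E] [NormedSpace ℝ E]
    [FiniteDimensional ℝ E] [Nontrivial E] [MeasurableSpace E] [BorelSpace E] {μ : Measure E}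
    [μ.IsAddHaarMeasure] {f : E → ℝ} {x : E} {r : ℝ} (hf : IntegrableOn f (ball x r) μ) :
    ContinuousOn (fun s => ∫ y in ball x s, f y ∂μ) (Iic r) := by
  intro s _
  simp only [← integral_indicator measurableSet_ball]
  have hint := hf.integrable_indicator measurableSet_ball
  refine continuousWithinAt_of_dominated (bound := fun y => ‖(ball x r).indicator f y‖) ?_ ?_
    hint.norm ?_
  · filter_upwards [self_mem_nhdsWithin] with t ht
    exact ((hf.mono_set (ball_subset_ball ht)).integrable_indicator
      measurableSet_ball).aestronglyMeasurable
  · filter_upwards [self_mem_nhdsWithin] with t ht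
    exact ae_of_all _ fun y => norm_indicator_le_of_subset (ball_subset_ball ht) f y
  · filter_upwards [measure_eq_zero_iff_ae_notMem.mp (Measure.addHaar_sphere μ x s)] with y hy
    refine ((continuousAt_const (y := (ball x s).indicator f y)).congr ?_).continuousWithinAt
    rcases lt_or_gt_of_ne (mem_sphere.not.mp hy) with h | h
    · filter_upwards [lt_mem_nhds h] with t ht
      rw [indicator_of_mem (mem_ball.mpr h), indicator_of_mem (mem_ball.mpr ht)]
    · filter_upwards [gt_mem_nhds h] with t ht
      exact (indicator_of_notMem (s := ball x s) h.not_gt f).trans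
        (indicator_of_notMem (s := ball x t) ht.not_gt f).symm

lemma exists_lt_on_annulus {X : Type*} [PseudoMetricSpace X] [ProperSpace X] {f : X → ℝ}
    {x : X} {s r a : ℝ} (hf : ContinuousOn f (closedBall x r)) (hsr : s < r)
    (ha : ∀ y ∈ sphere x s, f y < a) :
    ∃ t ∈ Ioc s r, ∀ y, s ≤ dist y x → dist y x < t → f y < a := by
  let K : Set X := closedBall x r ∩ f ⁻¹' Ici a ∩ {y | s ≤ dist y x}
  have hK : IsCompact K := (isCompact_closedBall x r).of_isClosed_subset
    ((hf.preimage_isClosed_of_isClosed isClosed_closedBall isClosed_Ici).inter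
      (isClosed_le continuous_const (by fun_prop))) (inter_subset_left.trans inter_subset_left)
  have hgood : ∀ y, s ≤ dist y x → dist y x ≤ r → y ∉ K → f y < a := fun y hsy hyr hy =>
    not_le.mp fun h => hy ⟨⟨hyr, h⟩, hsy⟩
  rcases K.eq_empty_or_nonempty with hK₀ | hne
  · exact ⟨r, ⟨hsr, le_rfl⟩, fun y hsy hy => hgood y hsy hy.le (hK₀ ▸ notMem_empty y)⟩
  obtain ⟨z, ⟨⟨hzr, hza⟩, hzs⟩, hmin⟩ :=
    hK.exists_isMinOn hne (f := fun y => dist y x) (by fun_prop)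
  refine ⟨dist z x, ⟨hzs.lt_of_ne fun h => (ha z h.symm).not_ge hza, hzr⟩, fun y hsy hy => ?_⟩
  exact hgood y hsy (hy.le.trans hzr) fun hyK => (hmin hyK).not_gt hy

variable {d : ℕ} {u : Euc d → ℝ} {U : Set (Euc d)} {x : Euc d}

lemma HarmonicOnS.setIntegral_ball_sub_eq_zero (hu : HarmonicOnS u univ) (x : Euc d) (t : ℝ) :
    ∫ y in ball x t, (u y - u x) = 0 := by
  rcases le_or_gt t 0 with ht | ht
  · simp [ball_eq_empty.mpr ht]
  have hint : IntegrableOn u (ball x t) :=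
    integrableOn_ball_of_continuousOn hu.continuous.continuousOn
  have hvol : volume.real (ball x t) ≠ 0 :=
    (ENNReal.toReal_pos (measure_ball_pos volume x ht).ne' measure_ball_lt_top.ne).ne'
  have havg := hu.setAverage_eq x ht
  rw [MeasureTheory.setAverage_eq, smul_eq_mul, inv_mul_eq_iff_eq_mul₀ hvol] at havg
  rw [integral_sub hint (integrableOn_const measure_ball_lt_top.ne), setIntegral_const, havg,
    smul_eq_mul, sub_self]

lemma LocallySuperharmonicOn.exists_harmonicOnS_near [NeZero d]
    (hu : LocallySuperharmonicOn u U) {s : ℝ} (hs : 0 ≤ s) (hx : closedBall x s ⊆ U)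
    {ε : ℝ} (hε : 0 < ε) :
    ∃ P : Euc d → ℝ, HarmonicOnS P univ ∧ (∀ y ∈ sphere x s, |P y - u y| ≤ ε) ∧
      ∀ y ∈ closedBall x s, P y ≤ u y + ε := by
  obtain rfl | hs := hs.eq_or_lt
  · refine ⟨_, .const (u x), fun y hy => ?_, fun y hy => ?_⟩
    · simp [show y = x by simpa using hy, hε.le]
    · simp [show y = x by simpa using hy, hε.le]
  have huc : ContinuousOn u (closedBall x s) := hu.1.mono hx
  obtain ⟨P, hP, hPu⟩ := exists_harmonicOnS_near_on_sphere hs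
    (huc.mono sphere_subset_closedBall) hε
  refine ⟨P, hP, hPu, fun y hy => ?_⟩
  have hsuper : LocallySuperharmonicOn (fun y => u y + -P y) (ball x s) :=
    (hu.mono (ball_subset_closedBall.trans hx)).add isOpen_ball
      ((hP.superharmonicOn_neg.mono (subset_univ _)).locally isOpen_ball)
  have hmin := hsuper.le_of_le_on_diff (isCompact_closedBall x s) isOpen_ball
    ball_subset_closedBall (huc.add hP.continuous.neg.continuousOn) (m := -ε)
    (fun z hz => by
      have := hPu z (closedBall_sdiff_ball (x := x) ▸ hz)
      linarith [(abs_le.mp this).2]) y hy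
  linarith

-- The set of radii `s` with `∫ y in ball x s, (u y - u x - 3 * ε) ≤ 0` is closed, and it can be
-- enlarged past any `s`: on a thin annulus outside `sphere x s`, `u` is at most `P + 2 * ε` for a
-- harmonic `P` that is close to `u` on the sphere, hence at most `u + ε` at the center.
lemma LocallySuperharmonicOn.exists_setIntegral_ball_nonpos [NeZero d]
    (hu : LocallySuperharmonicOn u U) {r s ε : ℝ} (hx : closedBall x r ⊆ U) (hs : s ∈ Ico 0 r)
    (hε : 0 < ε) :
    ∃ t > s, ∀ t' ∈ Ioc s t,
      ∫ y in ball x t', (u y - u x - 3 * ε) ≤ ∫ y in ball x s, (u y - u x - 3 * ε) := by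
  have huc : ContinuousOn u (closedBall x r) := hu.1.mono hx
  obtain ⟨P, hP, hPs, hPx⟩ := hu.exists_harmonicOnS_near hs.1
    ((closedBall_subset_closedBall hs.2.le).trans hx) hε
  obtain ⟨t, ht, hlt⟩ := exists_lt_on_annulus (f := fun y => u y - P y) (a := 2 * ε)
    (huc.sub hP.continuous.continuousOn) hs.2 fun y hy => by
      linarith [(abs_le.mp (hPs y hy)).1]
  refine ⟨t, ht.1, fun t' ht' => ?_⟩
  have hsub : ball x s ⊆ ball x t' := ball_subset_ball ht'.1.le
  have hui : IntegrableOn (fun y => u y - u x - 3 * ε) (ball x t') :=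
    integrableOn_ball_of_continuousOn (((huc.mono
      (closedBall_subset_closedBall (ht'.2.trans ht.2))).sub continuousOn_const).sub
        continuousOn_const)
  have hPi : IntegrableOn (fun y => P y - P x) (ball x t') :=
    integrableOn_ball_of_continuousOn (hP.continuous.sub continuous_const).continuousOn
  have hPann : ∫ y in ball x t' \ ball x s, (P y - P x) = 0 := by
    rw [setIntegral_sdiff measurableSet_ball hPi hsub, hP.setIntegral_ball_sub_eq_zero,
      hP.setIntegral_ball_sub_eq_zero, sub_self]
  have hann : ∫ y in ball x t' \ ball x s, (u y - u x - 3 * ε) ≤ 0 := by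
    rw [← hPann]
    refine setIntegral_mono_on (hui.mono_set sdiff_subset) (hPi.mono_set sdiff_subset)
      (measurableSet_ball.diff measurableSet_ball) fun y hy => ?_
    have := hlt y (not_lt.mp hy.2) (hy.1.trans_le ht'.2)
    linarith [hPx x (mem_closedBall_self hs.1)]
  rw [setIntegral_sdiff measurableSet_ball hui hsub] at hann
  linarith

theorem LocallySuperharmonicOn.superharmonicOn [NeZero d] (hu : LocallySuperharmonicOn u U) :
    SuperharmonicOn u U := by
  refine superharmonicOn_iff.mpr ⟨hu.1, fun x _ r hr hx => le_of_forall_pos_le_add fun ε hε => ?_⟩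
  have hui : IntegrableOn u (ball x r) := integrableOn_ball_of_continuousOn (hu.1.mono hx)
  let Φ : ℝ → ℝ := fun s => ∫ y in ball x s, (u y - u x - 3 * (ε / 3))
  have hΦc : ContinuousOn Φ (Icc 0 r) := (continuousOn_setIntegral_ball
    ((hui.sub (integrableOn_const measure_ball_lt_top.ne)).sub
      (integrableOn_const measure_ball_lt_top.ne))).mono Icc_subset_Iic_self
  have hΦ : Icc 0 r ⊆ {s | Φ s ≤ 0} := by
    refine IsClosed.Icc_subset_of_forall_exists_gt ?_ (by simp [Φ]) fun s hs t' ht' => ?_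
    · rw [inter_comm]
      exact hΦc.preimage_isClosed_of_isClosed isClosed_Icc isClosed_Iic
    · obtain ⟨t, hst, ht⟩ := hu.exists_setIntegral_ball_nonpos hx hs.2 (div_pos hε three_pos)
      have hmem : min t t' ∈ Ioc s t := ⟨lt_min hst ht', min_le_left _ _⟩
      exact ⟨min t t', (ht _ hmem).trans hs.1, hmem.1, min_le_right _ _⟩
  have hr₀ := hΦ (right_mem_Icc.mpr hr.le)
  have hvol : 0 < volume.real (ball x r) :=
    ENNReal.toReal_pos (measure_ball_pos volume x hr).ne' measure_ball_lt_top.ne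
  have hconst (a : ℝ) : IntegrableOn (fun _ => a) (ball x r) volume :=
    integrableOn_const measure_ball_lt_top.ne
  simp only [Φ, mem_ofPred_eq, sub_sub] at hr₀
  rw [integral_sub hui (hconst _), setIntegral_const, smul_eq_mul, sub_nonpos] at hr₀
  rw [setAverage_eq, smul_eq_mul, inv_mul_le_iff₀ hvol]
  linarith

end LocalToGlobal

section Envelope

variable {d : ℕ} {t u v w h : Euc d → ℝ} {U V : Set (Euc d)}

lemma superharmonicOn_of_eventuallyEq [NeZero d] (hU : IsOpen U)
    (hw : ∀ x ∈ U, ∃ g, SuperharmonicOn g U ∧ w =ᶠ[𝓝 x] g) : SuperharmonicOn w U := by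
  refine LocallySuperharmonicOn.superharmonicOn ⟨fun x hx => ?_, fun x hx => ?_⟩
  · obtain ⟨g, hg, hwg⟩ := hw x hx
    exact ((hg.continuousOn.continuousAt (hU.mem_nhds hx)).congr hwg.symm).continuousWithinAt
  · obtain ⟨g, hg, hwg⟩ := hw x hx
    filter_upwards [hg.eventually_setAverage_le (hU.mem_nhds hx),
      eventually_closedBall_subset hwg] with r hgr hr
    rw [setAverage_congr_fun measurableSet_ball
      (ae_of_all _ fun y hy => hr (ball_subset_closedBall hy)), hwg.eq_of_nhds]
    exact hgr

open Classical in
lemma superharmonicOn_piecewise_min [NeZero d] (hU : IsOpen U) (hv : SuperharmonicOn v U)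
    (hh : SuperharmonicOn h U) (hV : IsOpen V) (hlt : ∀ x ∈ U ∩ frontier V, v x < h x) :
    SuperharmonicOn (V.piecewise (fun y => min (v y) (h y)) v) U := by
  refine superharmonicOn_of_eventuallyEq hU fun x hx => ?_
  by_cases hxV : x ∈ V
  · exact ⟨_, hv.min hh, mem_of_superset (hV.mem_nhds hxV) fun y hy => piecewise_eq_of_mem _ _ _ hy⟩
  refine ⟨v, hv, ?_⟩
  by_cases hxc : x ∈ closure V
  · have hnear : ∀ᶠ y in 𝓝 x, v y < h y :=
      (hv.continuousOn.continuousAt (hU.mem_nhds hx)).eventually_lt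
        (hh.continuousOn.continuousAt (hU.mem_nhds hx))
        (hlt x ⟨hx, hxc, by rwa [hV.interior_eq]⟩)
    filter_upwards [hnear] with y hy
    by_cases hyV : y ∈ V
    · rw [piecewise_eq_of_mem _ _ _ hyV, min_eq_left hy.le]
    · exact piecewise_eq_of_notMem _ _ _ hyV
  · filter_upwards [isClosed_closure.isOpen_compl.mem_nhds hxc] with y hy
    exact piecewise_eq_of_notMem _ _ _ fun hyV => hy (subset_closure hyV)

lemma HarmonicOnS.le_two_pow_mul (hu : HarmonicOnS u univ) {x : Euc d} {R : ℝ} (hR : 0 < R)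
    (hpos : ∀ y ∈ ball x R, 0 ≤ u y) : ∀ y ∈ closedBall x (R / 2), u y ≤ 2 ^ d * u x := by
  intro y hy
  have hsub : ball y (R / 2) ⊆ ball x R := ball_subset_ball' (by linarith [mem_closedBall.mp hy])
  have hint : IntegrableOn u (ball x R) :=
    integrableOn_ball_of_continuousOn hu.continuous.continuousOn
  have hR' : 0 < (R / 2) ^ d * volume.real (ball (0 : Euc d) 1) :=
    mul_pos (pow_pos (half_pos hR) d)
      (ENNReal.toReal_pos (measure_ball_pos volume _ one_pos).ne' measure_ball_lt_top.ne)
  have hvol (z : Euc d) {r : ℝ} (hr : 0 < r) :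
      volume.real (ball z r) = r ^ d * volume.real (ball (0 : Euc d) 1) := by
    rw [measureReal_def, Measure.addHaar_ball_of_pos _ _ hr, ENNReal.toReal_mul,
      ENNReal.toReal_ofReal (by positivity), finrank_euclideanSpace_fin, measureReal_def]
  have hmean (z : Euc d) {r : ℝ} (hr : 0 < r) :
      ∫ w in ball z r, u w = r ^ d * volume.real (ball (0 : Euc d) 1) * u z := by
    have h₀ := hu.setIntegral_ball_sub_eq_zero z r
    rw [integral_sub (integrableOn_ball_of_continuousOn hu.continuous.continuousOn)
      (integrableOn_const measure_ball_lt_top.ne), setIntegral_const, hvol z hr, smul_eq_mul,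
      sub_eq_zero] at h₀
    exact h₀
  have hle : ∫ w in ball y (R / 2), u w ≤ ∫ w in ball x R, u w :=
    setIntegral_mono_set hint
      ((ae_restrict_mem measurableSet_ball).mono hpos) hsub.eventuallyLE
  rw [hmean y (half_pos hR), hmean x hR] at hle
  refine le_of_mul_le_mul_left (hle.trans_eq ?_) hR'
  rw [div_pow]
  field_simp

lemma locallySuperharmonicOn_of_harmonic_near (hu : ∀ x ∈ U, ∃ R > 0, ∀ ε > 0,
    ∃ P : Euc d → ℝ, HarmonicOnS P univ ∧ ∀ y ∈ closedBall x R, |u y - P y| ≤ ε) :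
    LocallySuperharmonicOn u U := by
  have hcont : ∀ x ∈ U, ∃ R > 0, ContinuousOn u (closedBall x R) := fun x hx => by
    obtain ⟨R, hR, happrox⟩ := hu x hx
    refine ⟨R, hR, continuousOn_of_uniform_approx_of_continuousOn fun s hs => ?_⟩
    obtain ⟨ε, hε, hεs⟩ := Metric.mem_uniformity_dist.mp hs
    obtain ⟨P, hP, hPu⟩ := happrox (ε / 2) (half_pos hε)
    exact ⟨P, hP.continuous.continuousOn, fun y hy => hεs ((hPu y hy).trans_lt (half_lt_self hε))⟩
  refine ⟨fun x hx => ?_, fun x hx => ?_⟩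
  · obtain ⟨R, hR, huc⟩ := hcont x hx
    exact (huc.continuousAt (closedBall_mem_nhds x hR)).continuousWithinAt
  · obtain ⟨R, hR, happrox⟩ := hu x hx
    obtain ⟨R', hR', huc⟩ := hcont x hx
    filter_upwards [Ioo_mem_nhdsGT (lt_min hR hR')] with r hr
    refine le_of_forall_pos_le_add fun ε hε => ?_
    obtain ⟨P, hP, hPu⟩ := happrox (ε / 2) (half_pos hε)
    have hPε : HarmonicOnS (fun y => P y + ε / 2) univ := hP.add (.const _)
    calc ⨍ y in ball x r, u y
        ≤ ⨍ y in ball x r, (P y + ε / 2) := by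
          refine setAverage_mono measurableSet_ball
            (integrableOn_ball_of_continuousOn (huc.mono
              (closedBall_subset_closedBall (hr.2.le.trans (min_le_right _ _)))))
            (integrableOn_ball_of_continuousOn hPε.continuous.continuousOn) fun y hy => ?_
          have := hPu y (ball_subset_closedBall
            (ball_subset_ball (hr.2.le.trans (min_le_left _ _)) hy))
          linarith [(abs_le.mp this).2]
      _ = P x + ε / 2 := hPε.setAverage_eq x hr.1
      _ ≤ u x + ε := by linarith [(abs_le.mp (hPu x (mem_closedBall_self hR.le))).1]

/-- The superharmonic functions on `U` that lie below `t` and differ from it only on a compact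
subset of `U`, so that they have the boundary values of `t`. -/
def compactModifications (U : Set (Euc d)) (t : Euc d → ℝ) : Set (Euc d → ℝ) :=
  {v | SuperharmonicOn v U ∧ (∀ x, v x ≤ t x) ∧ ∃ K, IsCompact K ∧ K ⊆ U ∧ EqOn v t Kᶜ}

/-- The lower envelope of the compact modifications of `t` in `U`; for a bounded superharmonic
`t` it is harmonic in `U`, and it plays the role of the Perron solution with boundary data `t`. -/
def compactEnvelope (U : Set (Euc d)) (t : Euc d → ℝ) (x : Euc d) : ℝ :=
  ⨅ v : compactModifications U t, v.1 x

lemma self_mem_compactModifications (ht : SuperharmonicOn t U) : t ∈ compactModifications U t :=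
  ⟨ht, fun _ => le_rfl, ∅, isCompact_empty, empty_subset U, fun _ _ => rfl⟩

lemma min_mem_compactModifications (hv : v ∈ compactModifications U t)
    (hw : w ∈ compactModifications U t) :
    (fun y => min (v y) (w y)) ∈ compactModifications U t := by
  obtain ⟨hv, hvt, K, hK, hKU, hvK⟩ := hv
  obtain ⟨hw, -, L, hL, hLU, hwL⟩ := hw
  refine ⟨hv.min hw, fun x => (min_le_left _ _).trans (hvt x), K ∪ L, hK.union hL,
    union_subset hKU hLU, fun x hx => ?_⟩
  rw [compl_union] at hx
  simp only [hvK hx.1, hwL hx.2, min_self]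

lemma le_of_mem_compactModifications [NeZero d] (hU : IsOpen U)
    (hv : v ∈ compactModifications U t) {a : ℝ} (ha : ∀ x ∈ U, a ≤ t x) : ∀ x ∈ U, a ≤ v x := by
  obtain ⟨hv, -, K, hK, hKU, hvK⟩ := hv
  obtain ⟨L, hL, hKL, hLU⟩ := exists_compact_between hK hU hKU
  intro x hx
  by_cases hxL : x ∈ L
  · refine ((hv.mono (interior_subset.trans hLU)).locally isOpen_interior).le_of_le_on_diff hL
      isOpen_interior interior_subset (hv.continuousOn.mono hLU) (fun y hy => ?_) x hxL
    rw [hvK fun hyK => hy.2 (hKL hyK)]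
    exact ha y (hLU hy.1)
  · rw [hvK fun hxK => hxL (interior_subset (hKL hxK))]
    exact ha x hx

lemma compactEnvelope_le [NeZero d] (hU : IsOpen U) (ht : BddBelow (t '' U))
    (hv : v ∈ compactModifications U t) {x : Euc d} (hx : x ∈ U) :
    compactEnvelope U t x ≤ v x := by
  obtain ⟨a, ha⟩ := ht
  refine ciInf_le ⟨a, ?_⟩ (⟨v, hv⟩ : compactModifications U t)
  rintro _ ⟨w, rfl⟩
  exact le_of_mem_compactModifications hU w.2 (fun y hy => ha (mem_image_of_mem t hy)) x hx

lemma le_compactEnvelope (ht : SuperharmonicOn t U) {x : Euc d} {a : ℝ}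
    (ha : ∀ v ∈ compactModifications U t, a ≤ v x) : a ≤ compactEnvelope U t x :=
  have : Nonempty (compactModifications U t) := ⟨t, self_mem_compactModifications ht⟩
  le_ciInf fun v => ha v.1 v.2

lemma exists_mem_compactModifications_le_harmonic [NeZero d] (hU : IsOpen U)
    (hv : v ∈ compactModifications U t) {x : Euc d} {R : ℝ} (hR : 0 < R)
    (hx : closedBall x R ⊆ U) {ε : ℝ} (hε : 0 < ε) :
    ∃ P : Euc d → ℝ, HarmonicOnS P univ ∧ (∀ y ∈ closedBall x R, P y ≤ v y + ε) ∧
      ∃ w ∈ compactModifications U t, ∀ y ∈ ball x R, w y ≤ P y + 2 * ε := by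
  classical
  obtain ⟨hv, hvt, K, hK, hKU, hvK⟩ := hv
  obtain ⟨P, hP, hPs, hPv⟩ := (hv.locally hU).exists_harmonicOnS_near hR.le hx hε
  refine ⟨P, hP, hPv, (ball x R).piecewise (fun y => min (v y) (P y + 2 * ε)) v,
    ⟨?_, fun y => ?_, K ∪ closedBall x R, hK.union (isCompact_closedBall x R),
      union_subset hKU hx, fun y hy => ?_⟩, fun y hy => ?_⟩
  · refine superharmonicOn_piecewise_min hU hv
      ((hP.superharmonicOn.add (.const _)).mono (subset_univ _)) isOpen_ball fun y hy => ?_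
    linarith [(abs_le.mp (hPs y (frontier_ball_subset_sphere hy.2))).1]
  · by_cases hy : y ∈ ball x R
    · rw [piecewise_eq_of_mem _ _ _ hy]
      exact (min_le_left _ _).trans (hvt y)
    · rw [piecewise_eq_of_notMem _ _ _ hy]
      exact hvt y
  · rw [compl_union] at hy
    rw [piecewise_eq_of_notMem _ _ _ fun hyb => hy.2 (ball_subset_closedBall hyb), hvK hy.1]
  · rw [piecewise_eq_of_mem _ _ _ hy]
    exact min_le_right _ _

-- `P` approximates a modification `v` that is almost optimal at `x`. For any other modification
-- `v'` there is a harmonic `P' ≤ v' + ε` with `P' ≤ P + 3 * ε`, and Harnack's inequality for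
-- `P + 3 * ε - P'`, which is small at `x`, bounds `P` by `v'` up to a multiple of `ε`.
lemma exists_harmonicOnS_near_compactEnvelope [NeZero d] (hU : IsOpen U)
    (ht : SuperharmonicOn t U) (htb : BddBelow (t '' U)) {x : Euc d} {R : ℝ} (hR : 0 < R)
    (hx : closedBall x R ⊆ U) {ε : ℝ} (hε : 0 < ε) :
    ∃ P : Euc d → ℝ, HarmonicOnS P univ ∧
      ∀ y ∈ closedBall x (R / 2), |compactEnvelope U t y - P y| ≤ (7 * 2 ^ d + 4) * ε := by
  have hxx : x ∈ closedBall x R := mem_closedBall_self hR.le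
  have hhalf : closedBall x (R / 2) ⊆ ball x R := closedBall_subset_ball (half_lt_self hR)
  obtain ⟨v, hv, hvx⟩ : ∃ v ∈ compactModifications U t, v x < compactEnvelope U t x + ε := by
    by_contra! hcon
    linarith [le_compactEnvelope ht hcon]
  obtain ⟨P, hP, hPv, w, hw, hwP⟩ := exists_mem_compactModifications_le_harmonic hU hv hR hx hε
  refine ⟨P, hP, fun y hy => abs_le.mpr ⟨?_, ?_⟩⟩
  · suffices P y - (7 * 2 ^ d + 4) * ε ≤ compactEnvelope U t y by linarith
    refine le_compactEnvelope ht fun v' hv' => ?_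
    obtain ⟨P', hP', hPw', w', hw', hwP'⟩ := exists_mem_compactModifications_le_harmonic hU
      (min_mem_compactModifications hw hv') hR hx hε
    have hQ : HarmonicOnS (fun z => P z + 3 * ε + -P' z) univ :=
      (hP.add (.const _)).add hP'.neg
    have hpos : ∀ z ∈ ball x R, 0 ≤ P z + 3 * ε + -P' z := fun z hz => by
      have := hPw' z (ball_subset_closedBall hz)
      linarith [hwP z hz, min_le_left (w z) (v' z)]
    have hQx : P x + 3 * ε + -P' x ≤ 7 * ε := by
      have := compactEnvelope_le hU htb hw' (hx hxx)
      linarith [hwP' x (mem_ball_self hR), hPv x hxx]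
    have hharnack := hQ.le_two_pow_mul hR hpos y hy
    have hQx' := mul_le_mul_of_nonneg_left hQx (pow_nonneg zero_le_two d)
    have := hPw' y (ball_subset_closedBall (hhalf hy))
    linarith [min_le_right (w y) (v' y)]
  · have := compactEnvelope_le hU htb hw (hx (ball_subset_closedBall (hhalf hy)))
    have h2 : 0 ≤ (7 * 2 ^ d + 2) * ε := by positivity
    linarith [hwP y (hhalf hy)]

theorem superharmonicOn_neg_compactEnvelope [NeZero d] (hU : IsOpen U)
    (ht : SuperharmonicOn t U) (htb : BddBelow (t '' U)) :
    SuperharmonicOn (fun x => -compactEnvelope U t x) U := by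
  refine LocallySuperharmonicOn.superharmonicOn (locallySuperharmonicOn_of_harmonic_near ?_)
  intro x hx
  obtain ⟨R, hR, hRU⟩ := nhds_basis_closedBall.mem_iff.mp (hU.mem_nhds hx)
  refine ⟨R / 2, half_pos hR, fun ε hε => ?_⟩
  obtain ⟨P, hP, hPt⟩ := exists_harmonicOnS_near_compactEnvelope hU ht htb hR hRU
    (ε := ε / (7 * 2 ^ d + 4)) (by positivity)
  refine ⟨fun y => -P y, hP.neg, fun y hy => ?_⟩
  have := hPt y hy
  rwa [mul_div_cancel₀ _ (by positivity), abs_sub_comm, ← neg_sub_neg] at this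

end Envelope

section StrictlySuperharmonic

variable {E : Type*} [NormedAddCommGroup E] [InnerProductSpace ℝ E]

lemma contDiff_one_add_norm_sq_rpow (s : ℝ) {k : WithTop ℕ∞} :
    ContDiff ℝ k fun x : E => (1 + ‖x‖ ^ 2) ^ s :=
  (contDiff_const.add (contDiff_norm_sq ℝ)).rpow_const_of_ne fun x => by positivity

lemma fderiv_one_add_norm_sq_rpow (s : ℝ) (x v : E) :
    fderiv ℝ (fun y => (1 + ‖y‖ ^ 2) ^ s) x v = 2 * s * ((1 + ‖x‖ ^ 2) ^ (s - 1) * ⟪v, x⟫_ℝ) := by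
  have h : HasFDerivAt (fun y : E => 1 + ‖y‖ ^ 2) _ x :=
    (hasStrictFDerivAt_norm_sq x).hasFDerivAt.const_add 1
  rw [(h.rpow_const (p := s) (Or.inl (by positivity))).fderiv]
  simp only [smul_apply, innerSL_apply_apply, smul_eq_mul, nsmul_eq_mul, Nat.cast_ofNat,
    real_inner_comm v x]
  ring

lemma fderiv_fderiv_one_add_norm_sq_rpow (s : ℝ) (x v : E) :
    fderiv ℝ (fun y => fderiv ℝ (fun z => (1 + ‖z‖ ^ 2) ^ s) y v) x v =
      2 * s * (1 + ‖x‖ ^ 2) ^ (s - 2) *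
        (2 * (s - 1) * ⟪v, x⟫_ℝ ^ 2 + (1 + ‖x‖ ^ 2) * ‖v‖ ^ 2) := by
  have hpow : DifferentiableAt ℝ (fun y : E => (1 + ‖y‖ ^ 2) ^ (s - 1)) x :=
    (contDiff_one_add_norm_sq_rpow (s - 1) (k := 1)).differentiable one_ne_zero x
  have hinner : HasFDerivAt (fun y => ⟪v, y⟫_ℝ) (innerSL ℝ v) x := (innerSL ℝ v).hasFDerivAt
  have hrpow : (1 + ‖x‖ ^ 2) ^ (s - 1) = (1 + ‖x‖ ^ 2) ^ (s - 2) * (1 + ‖x‖ ^ 2) := by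
    rw [← Real.rpow_add_one (by positivity)]
    congr 1
    ring
  simp only [fderiv_one_add_norm_sq_rpow s]
  rw [fderiv_const_mul (hpow.fun_mul hinner.differentiableAt), fderiv_fun_mul hpow
    hinner.differentiableAt, hinner.fderiv]
  simp only [smul_apply, add_apply, innerSL_apply_apply, smul_eq_mul, fderiv_one_add_norm_sq_rpow,
    hrpow, real_inner_self_eq_norm_sq]
  rw [show s - 1 - 1 = s - 2 by ring]
  ring

variable [FiniteDimensional ℝ E]

lemma laplacian_one_add_norm_sq_rpow (s : ℝ) (x : E) :
    Δ (fun y : E => ((1 + ‖y‖ ^ 2) ^ s : ℝ)) x = 2 * s * (1 + ‖x‖ ^ 2) ^ (s - 2) *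
      (2 * (s - 1) * ‖x‖ ^ 2 + Module.finrank ℝ E * (1 + ‖x‖ ^ 2)) := by
  let e := stdOrthonormalBasis ℝ E
  rw [laplacian_eq_sum_fderiv e (contDiff_one_add_norm_sq_rpow s)]
  simp only [fderiv_fderiv_one_add_norm_sq_rpow, ← Finset.mul_sum, Finset.sum_add_distrib,
    e.norm_eq_one, one_pow, mul_one, e.sum_sq_inner_right, Finset.sum_const, Finset.card_univ,
    Fintype.card_fin, nsmul_eq_mul]
  ring

lemma laplacian_one_add_norm_sq_rpow_neg (hE : 3 ≤ Module.finrank ℝ E) (x : E) :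
    Δ (fun y : E => ((1 + ‖y‖ ^ 2) ^ (-1 / 2 : ℝ) : ℝ)) x < 0 := by
  have hd : (3 : ℝ) ≤ Module.finrank ℝ E := by exact_mod_cast hE
  have hpow : 0 < (1 + ‖x‖ ^ 2) ^ (-1 / 2 - 2 : ℝ) := by positivity
  have hfactor : 0 < 2 * (-1 / 2 - 1) * ‖x‖ ^ 2 + Module.finrank ℝ E * (1 + ‖x‖ ^ 2) := by
    nlinarith [sq_nonneg ‖x‖]
  rw [laplacian_one_add_norm_sq_rpow]
  linarith [mul_pos hpow hfactor]

lemma continuous_laplacian {f : E → ℝ} (hf : ContDiff ℝ 2 f) : Continuous (Δ f) := by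
  have hderiv := hf.fderiv_right (m := 1) le_rfl
  rw [funext (laplacian_eq_sum_fderiv (stdOrthonormalBasis ℝ E) hf)]
  exact continuous_finsetSum _ fun i _ =>
    ((hderiv.clm_apply contDiff_const).continuous_fderiv one_ne_zero).clm_apply continuous_const

lemma exists_laplacian_add_const_mul_nonpos {φ g : E → ℝ} (hφ : ContDiff ℝ 2 φ)
    (hsupp : HasCompactSupport φ) (hg : ContDiff ℝ 2 g) (hneg : ∀ x, Δ g x < 0) :
    ∃ M, 0 ≤ M ∧ ∀ x, Δ (fun y => φ y + M * g y) x ≤ 0 := by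
  have hΔsupp : HasCompactSupport (Δ φ) := by
    refine hsupp.mono' fun x hx => ?_
    contrapose! hx
    rw [notMem_tsupport_iff_eventuallyEq] at hx
    rw [Function.notMem_support, (InnerProductSpace.laplacian_congr_nhds hx).eq_of_nhds]
    exact congrFun (InnerProductSpace.laplacian_const (F := ℝ) (c := 0)) x
  obtain ⟨M, hM⟩ := ((continuous_laplacian hφ).div (continuous_laplacian hg)
    fun x => (hneg x).ne).bounded_above_of_compact_support (hΔsupp.mul_right (f' := (Δ g)⁻¹))
  refine ⟨M, (norm_nonneg _).trans (hM 0), fun x => ?_⟩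
  have hsum : Δ (fun y => φ y + M * g y) x = Δ φ x + M * Δ g x := by
    have hadd := hφ.contDiffAt.laplacian_add (hg.const_smul M).contDiffAt (x := x)
    exact hadd.trans (congrArg _ (InnerProductSpace.laplacian_smul M hg.contDiffAt))
  have hbound := (neg_le_abs _).trans (hM x)
  rw [Pi.div_apply, ← div_neg, div_le_iff₀ (neg_pos.mpr (hneg x))] at hbound
  linarith

end StrictlySuperharmonic

section Perron

variable {d : ℕ} {Ω : Set (Euc d)} {f g u v : Euc d → ℝ} {p : Euc d} {a : ℝ}

/-- The bounded members of the upper class of the boundary data `f`. The boundary inequality is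
expressed through neighbourhoods, because the real-valued `liminf` in `upperFamily` has junk values
for unbounded functions. -/
structure IsUpperFunction (Ω : Set (Euc d)) (f u : Euc d → ℝ) : Prop where
  superharmonicOn : SuperharmonicOn u Ω
  bddBelow : BddBelow (u '' Ω)
  bddAbove : BddAbove (u '' Ω)
  eventually_lt : ∀ ξ ∈ frontier Ω, ∀ a < f ξ, ∀ᶠ x in 𝓝[Ω] ξ, a < u x

namespace IsUpperFunction

lemma mem_upperFamily (hu : IsUpperFunction Ω f u) : u ∈ upperFamily Ω f := by
  refine ⟨hu.superharmonicOn, hu.bddBelow, fun ξ hξ => ?_⟩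
  have : (𝓝[Ω] ξ).NeBot := mem_closure_iff_nhdsWithin_neBot.mp hξ.1
  obtain ⟨M, hM⟩ := hu.bddAbove
  have hle : ∀ᶠ x in 𝓝[Ω] ξ, u x ≤ M :=
    eventually_mem_nhdsWithin.mono fun x hx => hM (mem_image_of_mem u hx)
  refine le_of_forall_lt fun a ha => ?_
  obtain ⟨b, hab, hb⟩ := exists_between ha
  exact hab.trans_le (le_liminf_of_le (IsBoundedUnder.isCoboundedUnder_ge ⟨M, hle⟩)
    ((hu.eventually_lt ξ hξ b hb).mono fun _ => le_of_lt))

lemma min_of_mem_upperFamily (hu : u ∈ upperFamily Ω f) (M : ℝ) :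
    IsUpperFunction Ω (fun ξ => min (f ξ) M) (fun x => min (u x) M) := by
  obtain ⟨hs, ⟨m, hm⟩, hf⟩ := hu
  replace hm : ∀ x ∈ Ω, m ≤ u x := fun x hx => hm (mem_image_of_mem u hx)
  refine ⟨SuperharmonicOn.min hs (.const M), ⟨min m M, ?_⟩, ⟨M, ?_⟩, fun ξ hξ a ha => ?_⟩
  · rintro _ ⟨x, hx, rfl⟩
    exact min_le_min_right M (hm x hx)
  · rintro _ ⟨x, -, rfl⟩
    exact min_le_right _ _
  · have hbdd : IsBoundedUnder (· ≥ ·) (𝓝[Ω] ξ) u := ⟨m, eventually_mem_nhdsWithin.mono hm⟩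
    rw [lt_min_iff] at ha
    filter_upwards [eventually_lt_of_lt_liminf (ha.1.trans_le (hf ξ hξ)) hbdd] with x hx
    exact lt_min hx ha.2

lemma mono (hu : IsUpperFunction Ω f u) (hgf : ∀ ξ ∈ frontier Ω, g ξ ≤ f ξ) :
    IsUpperFunction Ω g u :=
  ⟨hu.superharmonicOn, hu.bddBelow, hu.bddAbove, fun ξ hξ a ha =>
    hu.eventually_lt ξ hξ a (ha.trans_le (hgf ξ hξ))⟩

protected lemma const (a : ℝ) : IsUpperFunction Ω (fun _ => a) (fun _ => a) :=
  ⟨.const a, ⟨a, by rintro _ ⟨_, -, rfl⟩; rfl⟩, ⟨a, by rintro _ ⟨_, -, rfl⟩; rfl⟩,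
    fun _ _ _ hb => Eventually.of_forall fun _ => hb⟩

lemma add (hu : IsUpperFunction Ω f u) (hv : IsUpperFunction Ω g v) :
    IsUpperFunction Ω (fun ξ => f ξ + g ξ) (fun x => u x + v x) := by
  refine ⟨hu.superharmonicOn.add hv.superharmonicOn, ?_, ?_, fun ξ hξ a ha => ?_⟩
  · obtain ⟨a, ha⟩ := hu.bddBelow
    obtain ⟨b, hb⟩ := hv.bddBelow
    refine ⟨a + b, ?_⟩
    rintro _ ⟨x, hx, rfl⟩
    exact add_le_add (ha (mem_image_of_mem u hx)) (hb (mem_image_of_mem v hx))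
  · obtain ⟨a, ha⟩ := hu.bddAbove
    obtain ⟨b, hb⟩ := hv.bddAbove
    refine ⟨a + b, ?_⟩
    rintro _ ⟨x, hx, rfl⟩
    exact add_le_add (ha (mem_image_of_mem u hx)) (hb (mem_image_of_mem v hx))
  · have hε : 0 < (f ξ + g ξ - a) / 2 := by linarith
    filter_upwards [hu.eventually_lt ξ hξ _ (sub_lt_self _ hε),
      hv.eventually_lt ξ hξ _ (sub_lt_self _ hε)] with x hx hx'
    linarith

lemma const_mul (hu : IsUpperFunction Ω f u) (ha : 0 < a) :
    IsUpperFunction Ω (fun ξ => a * f ξ) (fun x => a * u x) := by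
  refine ⟨hu.superharmonicOn.const_mul ha.le, ?_, ?_, fun ξ hξ b hb => ?_⟩
  · obtain ⟨m, hm⟩ := hu.bddBelow
    refine ⟨a * m, ?_⟩
    rintro _ ⟨x, hx, rfl⟩
    exact mul_le_mul_of_nonneg_left (hm (mem_image_of_mem u hx)) ha.le
  · obtain ⟨m, hm⟩ := hu.bddAbove
    refine ⟨a * m, ?_⟩
    rintro _ ⟨x, hx, rfl⟩
    exact mul_le_mul_of_nonneg_left (hm (mem_image_of_mem u hx)) ha.le
  · filter_upwards [hu.eventually_lt ξ hξ (b / a) ((div_lt_iff₀' ha).mpr hb)] with x hx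
    exact (div_lt_iff₀' ha).mp hx

end IsUpperFunction

lemma exists_isUpperFunction_lt (hf : BddAbove (range f)) (h : perron Ω f p < a) :
    ∃ u, IsUpperFunction Ω f u ∧ u p < a := by
  obtain ⟨M, hM⟩ := hf
  replace hM : ∀ ξ, f ξ ≤ M := fun ξ => hM (mem_range_self ξ)
  obtain ⟨_, ⟨u, hu, rfl⟩, hua⟩ := exists_lt_of_csInf_lt
    ⟨_, mem_image_of_mem (fun u => u p) ((IsUpperFunction.const M).mono
      fun ξ _ => hM ξ).mem_upperFamily⟩ h
  exact ⟨_, (IsUpperFunction.min_of_mem_upperFamily hu M).mono fun ξ _ => (min_eq_left (hM ξ)).ge,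
    (min_le_left _ _).trans_lt hua⟩

/-- The minimum principle for `Ω`, tested at the pole `p` only. It fails exactly when every Perron
solution at `p` is an infimum that is not bounded below, and hence has the junk value `0`. -/
def MinimumPrincipleAt (Ω : Set (Euc d)) (p : Euc d) : Prop :=
  ∀ u, IsUpperFunction Ω (fun _ => 0) u → 0 ≤ u p

lemma minimumPrincipleAt_of_perron_ne_zero (hf : BddAbove (range f)) (h : perron Ω f p ≠ 0) :
    MinimumPrincipleAt Ω p := by
  obtain ⟨M, hM⟩ := hf
  obtain ⟨b, hb⟩ : BddBelow ((fun u => u p) '' upperFamily Ω f) := by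
    by_contra hbdd
    exact h (Real.sInf_of_not_bddBelow hbdd)
  intro u hu
  by_contra! hneg
  set K := (|b - M| + 1) / -u p with hK
  have hK₀ : 0 < K := div_pos (by positivity) (neg_pos.mpr hneg)
  have hmem : (fun x => K * u x + M) ∈ upperFamily Ω f :=
    (((hu.const_mul hK₀).add (.const M)).mono fun ξ _ => by
      simpa using hM (mem_range_self ξ)).mem_upperFamily
  have hval : K * u p = -(|b - M| + 1) := by
    rw [hK, div_neg, neg_mul, div_mul_cancel₀ _ hneg.ne]
  have hle : b ≤ K * u p + M := hb (mem_image_of_mem (fun u => u p) hmem)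
  linarith [neg_abs_le (b - M)]

namespace MinimumPrincipleAt

variable (hp : MinimumPrincipleAt Ω p)

include hp

lemma le_of_isUpperFunction (hu : IsUpperFunction Ω f u) (hf : ∀ ξ, a ≤ f ξ) : a ≤ u p := by
  have := hp _ ((hu.add (.const (-a))).mono fun ξ _ => by linarith [hf ξ])
  linarith

lemma le_of_mem_upperFamily (hu : u ∈ upperFamily Ω f) (hf : ∀ ξ, a ≤ f ξ) : a ≤ u p :=
  (hp.le_of_isUpperFunction (.min_of_mem_upperFamily hu a) fun ξ => le_min (hf ξ) le_rfl).trans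
    (min_le_left _ _)

lemma perron_le (hf : BddBelow (range f)) (hu : IsUpperFunction Ω f u) : perron Ω f p ≤ u p := by
  obtain ⟨m, hm⟩ := hf
  refine csInf_le ⟨m, ?_⟩ (mem_image_of_mem (fun u => u p) hu.mem_upperFamily)
  rintro _ ⟨v, hv, rfl⟩
  exact hp.le_of_mem_upperFamily hv fun ξ => hm (mem_range_self ξ)

lemma perron_le_const (hf : BddBelow (range f)) (ha : ∀ ξ, f ξ ≤ a) : perron Ω f p ≤ a :=
  hp.perron_le hf ((IsUpperFunction.const a).mono fun ξ _ => ha ξ)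

lemma const_le_perron (hf : BddAbove (range f)) (ha : ∀ ξ, a ≤ f ξ) : a ≤ perron Ω f p :=
  le_of_forall_gt fun _ hb =>
    have ⟨_, hu, hub⟩ := exists_isUpperFunction_lt hf hb
    (hp.le_of_isUpperFunction hu ha).trans_lt hub

lemma perron_mono (hf : BddBelow (range f)) (hg : BddAbove (range g)) (h : ∀ ξ, f ξ ≤ g ξ) :
    perron Ω f p ≤ perron Ω g p :=
  le_of_forall_gt fun _ hb =>
    have ⟨_, hu, hub⟩ := exists_isUpperFunction_lt hg hb
    (hp.perron_le hf (hu.mono fun ξ _ => h ξ)).trans_lt hub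

lemma perron_add_le (hf : Bornology.IsBounded (range f)) (hg : Bornology.IsBounded (range g)) :
    perron Ω (fun ξ => f ξ + g ξ) p ≤ perron Ω f p + perron Ω g p := by
  refine le_of_forall_pos_le_add fun ε hε => ?_
  obtain ⟨u, hu, hup⟩ := exists_isUpperFunction_lt hf.bddAbove
    (lt_add_of_pos_right (perron Ω f p) (half_pos hε))
  obtain ⟨v, hv, hvp⟩ := exists_isUpperFunction_lt hg.bddAbove
    (lt_add_of_pos_right (perron Ω g p) (half_pos hε))
  have := hp.perron_le (hf.bddBelow.range_add hg.bddBelow) (hu.add hv)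
  linarith

end MinimumPrincipleAt

lemma isBounded_range_neg {α : Type*} {f : α → ℝ} (hf : Bornology.IsBounded (range f)) :
    Bornology.IsBounded (range fun x => -f x) :=
  hf.neg.subset (range_subset_iff.mpr fun x => neg_mem_neg.mpr (mem_range_self x))

lemma isBounded_range_const_mul {α : Type*} {f : α → ℝ} (hf : Bornology.IsBounded (range f))
    (a : ℝ) : Bornology.IsBounded (range fun x => a * f x) :=
  (hf.smul₀ a).subset (range_subset_iff.mpr fun x => smul_mem_smul_set (mem_range_self x))

lemma isBounded_range_add {α : Type*} {f g : α → ℝ} (hf : Bornology.IsBounded (range f))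
    (hg : Bornology.IsBounded (range g)) : Bornology.IsBounded (range fun x => f x + g x) :=
  (hf.add hg).subset (range_subset_iff.mpr fun x =>
    add_mem_add (mem_range_self x) (mem_range_self x))

lemma isUpperFunction_of_mem_compactModifications [NeZero d] (hΩ : IsOpen Ω) (hf : Continuous f)
    (hfb : Bornology.IsBounded (range f)) (hv : v ∈ compactModifications Ω f) :
    IsUpperFunction Ω f v := by
  obtain ⟨m, hm⟩ := hfb.bddBelow
  obtain ⟨M, hM⟩ := hfb.bddAbove
  refine ⟨hv.1, ⟨m, ?_⟩, ⟨M, ?_⟩, fun ξ hξ a ha => ?_⟩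
  · rintro _ ⟨x, hx, rfl⟩
    exact le_of_mem_compactModifications hΩ hv (fun y _ => hm (mem_range_self y)) x hx
  · rintro _ ⟨x, -, rfl⟩
    exact (hv.2.1 x).trans (hM (mem_range_self x))
  · obtain ⟨K, hK, hKΩ, hvf⟩ := hv.2.2
    have hξK : ξ ∈ Kᶜ := fun h => (hΩ.frontier_eq ▸ hξ).2 (hKΩ h)
    have hlt : ∀ᶠ x in 𝓝 ξ, a < f x := hf.continuousAt.eventually_const_lt ha
    filter_upwards [nhdsWithin_le_nhds (hK.isClosed.isOpen_compl.mem_nhds hξK),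
      nhdsWithin_le_nhds hlt] with x hxK hx
    rwa [hvf hxK]

lemma isUpperFunction_neg_compactEnvelope [NeZero d] (hΩ : IsOpen Ω) (hf : Continuous f)
    (hfb : Bornology.IsBounded (range f)) (hsup : SuperharmonicOn f Ω) :
    IsUpperFunction Ω (fun ξ => -f ξ) (fun x => -compactEnvelope Ω f x) := by
  obtain ⟨m, hm⟩ := hfb.bddBelow
  obtain ⟨M, hM⟩ := hfb.bddAbove
  have hbdd : BddBelow (f '' Ω) := hfb.bddBelow.mono (image_subset_range f Ω)
  have hle : ∀ x ∈ Ω, compactEnvelope Ω f x ≤ f x := fun x hx =>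
    compactEnvelope_le hΩ hbdd (self_mem_compactModifications hsup) hx
  refine ⟨superharmonicOn_neg_compactEnvelope hΩ hsup hbdd, ⟨-M, ?_⟩, ⟨-m, ?_⟩,
    fun ξ _ a ha => ?_⟩
  · rintro _ ⟨x, hx, rfl⟩
    exact neg_le_neg ((hle x hx).trans (hM (mem_range_self x)))
  · rintro _ ⟨x, hx, rfl⟩
    exact neg_le_neg (le_compactEnvelope hsup fun v hv =>
      le_of_mem_compactModifications hΩ hv (fun y _ => hm (mem_range_self y)) x hx)
  · have hlt : ∀ᶠ x in 𝓝 ξ, a < -f x := hf.neg.continuousAt.eventually_const_lt ha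
    filter_upwards [self_mem_nhdsWithin, nhdsWithin_le_nhds hlt] with x hxΩ hx
    exact hx.trans_le (neg_le_neg (hle x hxΩ))

lemma isBounded_range_sum {α ι : Type*} {φ : ι → α → ℝ} (s : Finset ι)
    (hφ : ∀ i ∈ s, Bornology.IsBounded (range (φ i))) :
    Bornology.IsBounded (range fun x => ∑ i ∈ s, φ i x) := by
  classical
  induction s using Finset.induction_on with
  | empty => exact Bornology.isBounded_singleton.subset range_const_subset
  | insert i s hi ih =>
    simp only [Finset.sum_insert hi]
    rw [Finset.forall_mem_insert] at hφ
    exact isBounded_range_add hφ.1 (ih hφ.2)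

/-- The boundary data `f` is resolutive at `p`: its upper Perron solution does not exceed its lower
one, which is `-perron Ω (-f) p`. -/
def ResolutiveAt (Ω : Set (Euc d)) (f : Euc d → ℝ) (p : Euc d) : Prop :=
  perron Ω f p + perron Ω (fun ξ => -f ξ) p ≤ 0

namespace MinimumPrincipleAt

variable (hp : MinimumPrincipleAt Ω p)

include hp

-- The envelope lies below every compact modification, each an upper function of `f`, while its
-- negative is an upper function of `-f`.
lemma resolutiveAt_of_superharmonicOn [NeZero d] (hΩ : IsOpen Ω) (hf : Continuous f)
    (hfb : Bornology.IsBounded (range f)) (hsup : SuperharmonicOn f Ω) : ResolutiveAt Ω f p := by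
  have hupper : perron Ω f p ≤ compactEnvelope Ω f p := le_compactEnvelope hsup fun v hv =>
    hp.perron_le hfb.bddBelow (isUpperFunction_of_mem_compactModifications hΩ hf hfb hv)
  have hlower : perron Ω (fun ξ => -f ξ) p ≤ -compactEnvelope Ω f p :=
    hp.perron_le (isBounded_range_neg hfb).bddBelow
      (isUpperFunction_neg_compactEnvelope hΩ hf hfb hsup)
  unfold ResolutiveAt
  linarith

lemma resolutiveAt_sub (hf : Bornology.IsBounded (range f)) (hg : Bornology.IsBounded (range g))
    (hfr : ResolutiveAt Ω f p) (hgr : ResolutiveAt Ω g p) :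
    ResolutiveAt Ω (fun ξ => f ξ - g ξ) p := by
  have hsub := hp.perron_add_le hf (isBounded_range_neg hg)
  have hsub' := hp.perron_add_le hg (isBounded_range_neg hf)
  simp only [ResolutiveAt, sub_eq_add_neg, neg_add_rev, neg_neg] at *
  linarith

lemma resolutiveAt_of_contDiff (hd : 3 ≤ d) (hΩ : IsOpen Ω)
    (hf : ContDiff ℝ 2 f) (hsupp : HasCompactSupport f) : ResolutiveAt Ω f p := by
  have : NeZero d := ⟨by lia⟩
  let w : Euc d → ℝ := fun x => (1 + ‖x‖ ^ 2) ^ (-1 / 2 : ℝ)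
  have hw : ContDiff ℝ 2 w := contDiff_one_add_norm_sq_rpow _
  have hwneg : ∀ x, Δ w x < 0 := laplacian_one_add_norm_sq_rpow_neg (by simpa using hd)
  obtain ⟨M, hM, hΔ⟩ := exists_laplacian_add_const_mul_nonpos hf hsupp hw hwneg
  have hwb : Bornology.IsBounded (range w) := by
    refine (isBounded_Icc 0 1).subset ?_
    rintro _ ⟨x, rfl⟩
    exact ⟨by positivity, Real.rpow_le_one_of_one_le_of_nonpos
      (le_add_of_nonneg_right (sq_nonneg _)) (by norm_num)⟩
  have hMwb : Bornology.IsBounded (range fun x => M * w x) := isBounded_range_const_mul hwb M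
  have hfb : Bornology.IsBounded (range f) :=
    (hsupp.isCompact_range hf.continuous).isBounded
  have hsum : Bornology.IsBounded (range fun x => f x + M * w x) :=
    isBounded_range_add hfb hMwb
  have hwsup : SuperharmonicOn w Ω :=
    (superharmonicOn_univ_of_laplacian_nonpos hw fun x => (hwneg x).le).mono (subset_univ Ω)
  have hsumsup : SuperharmonicOn (fun x => f x + M * w x) Ω :=
    (superharmonicOn_univ_of_laplacian_nonpos (hf.add (contDiff_const.mul hw)) hΔ).mono
      (subset_univ Ω)
  have hdiff := hp.resolutiveAt_sub hsum hMwb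
    (hp.resolutiveAt_of_superharmonicOn hΩ (by fun_prop) hsum hsumsup)
    (hp.resolutiveAt_of_superharmonicOn hΩ (by fun_prop) hMwb (hwsup.const_mul hM))
  simpa only [add_sub_cancel_right] using hdiff

lemma perron_sum_le {ι : Type*} {φ : ι → Euc d → ℝ} (s : Finset ι)
    (hφ : ∀ i ∈ s, Bornology.IsBounded (range (φ i))) :
    perron Ω (fun ξ => ∑ i ∈ s, φ i ξ) p ≤ ∑ i ∈ s, perron Ω (φ i) p := by
  classical
  induction s using Finset.induction_on with
  | empty =>
    simp only [Finset.sum_empty]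
    exact hp.perron_le_const (bddBelow_singleton.mono range_const_subset) fun _ => le_rfl
  | insert i s hi ih =>
    simp only [Finset.sum_insert hi]
    rw [Finset.forall_mem_insert] at hφ
    linarith [hp.perron_add_le hφ.1 (isBounded_range_sum s hφ.2), ih hφ.2]

-- Resolutivity turns subadditivity of the upper solution for `-φ i` into superadditivity for `φ i`.
lemma sum_perron_le {ι : Type*} {φ : ι → Euc d → ℝ} (s : Finset ι)
    (hφ : ∀ i ∈ s, Bornology.IsBounded (range (φ i))) (hres : ∀ i ∈ s, ResolutiveAt Ω (φ i) p)
    (ha : ∀ ξ, ∑ i ∈ s, φ i ξ ≤ a) : ∑ i ∈ s, perron Ω (φ i) p ≤ a := by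
  have hneg : ∀ i ∈ s, Bornology.IsBounded (range fun ξ => -φ i ξ) := fun i hi =>
    isBounded_range_neg (hφ i hi)
  have hlower : -a ≤ ∑ i ∈ s, perron Ω (fun ξ => -φ i ξ) p :=
    (hp.const_le_perron (isBounded_range_sum s hneg).bddAbove fun ξ => by
      simpa only [Finset.sum_neg_distrib] using neg_le_neg (ha ξ)).trans (hp.perron_sum_le s hneg)
  have hsum : ∑ i ∈ s, (perron Ω (φ i) p + perron Ω (fun ξ => -φ i ξ) p) ≤ 0 :=
    Finset.sum_nonpos hres
  rw [Finset.sum_add_distrib] at hsum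
  linarith

end MinimumPrincipleAt

end Perron

section HarmonicMeasure

variable {d : ℕ} {Ω A B : Set (Euc d)} {p : Euc d}

lemma isBounded_range_indicator_one {α : Type*} (A : Set α) :
    Bornology.IsBounded (range (A.indicator fun _ => (1 : ℝ))) :=
  (isBounded_Icc 0 1).subset (range_subset_iff.mpr fun x =>
    ⟨indicator_nonneg (fun _ _ => zero_le_one) x, indicator_le_self' (fun _ _ => zero_le_one) x⟩)

namespace MinimumPrincipleAt

variable (hp : MinimumPrincipleAt Ω p)

include hp

lemma hMeasure_nonneg : 0 ≤ hMeasure Ω p A :=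
  hp.const_le_perron (isBounded_range_indicator_one A).bddAbove
    (indicator_nonneg fun _ _ => zero_le_one)

lemma hMeasure_le_one : hMeasure Ω p A ≤ 1 :=
  hp.perron_le_const (isBounded_range_indicator_one A).bddBelow
    (indicator_le_self' fun _ _ => zero_le_one)

lemma hMeasure_mono (h : A ⊆ B) : hMeasure Ω p A ≤ hMeasure Ω p B :=
  hp.perron_mono (isBounded_range_indicator_one A).bddBelow
    (isBounded_range_indicator_one B).bddAbove
    (indicator_le_indicator_of_subset h fun _ => zero_le_one)

lemma hMeasure_biUnion_le {ι : Type*} (s : Finset ι) (E : ι → Set (Euc d)) :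
    hMeasure Ω p (⋃ i ∈ s, E i) ≤ ∑ i ∈ s, hMeasure Ω p (E i) := by
  have hbdd := fun i (_ : i ∈ s) => isBounded_range_indicator_one (E i)
  have hnonneg : ∀ i ξ, 0 ≤ (E i).indicator (fun _ => (1 : ℝ)) ξ := fun i =>
    indicator_nonneg fun _ _ => zero_le_one
  refine (hp.perron_mono (isBounded_range_indicator_one _).bddBelow
    (isBounded_range_sum s hbdd).bddAbove fun ξ => ?_).trans (hp.perron_sum_le s hbdd)
  refine indicator_le' (fun x hx => ?_) (fun x _ => Finset.sum_nonneg fun i _ => hnonneg i x) ξ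
  obtain ⟨i, hi, hxi⟩ := mem_iUnion₂.mp hx
  exact (indicator_of_mem hxi _).ge.trans (Finset.single_le_sum (fun j _ => hnonneg j x) hi)

lemma hMeasure_union_le : hMeasure Ω p (A ∪ B) ≤ hMeasure Ω p A + hMeasure Ω p B := by
  simpa only [union_eq_iUnion, Finset.mem_univ, iUnion_true, Fintype.sum_bool, cond] using
    hp.hMeasure_biUnion_le Finset.univ fun b => cond b A B

-- Each indicator is dominated by a bump function; bumps are resolutive, and these sum to at most 1.
lemma sum_hMeasure_le_one (hd : 3 ≤ d) (hΩ : IsOpen Ω) {ι : Type*} {s : Finset ι}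
    {E : ι → Set (Euc d)} {z : ι → Euc d} {r : ι → ℝ} (hr : ∀ i, 0 < r i)
    (hE : ∀ i, E i ⊆ closedBall (z i) (r i))
    (hdisj : (s : Set ι).PairwiseDisjoint fun i => closedBall (z i) (2 * r i)) :
    ∑ i ∈ s, hMeasure Ω p (E i) ≤ 1 := by
  let φ : ∀ i, ContDiffBump (z i) := fun i => ⟨r i, 2 * r i, hr i, by linarith [hr i]⟩
  have hbdd : ∀ i, Bornology.IsBounded (range (φ i)) := fun i =>
    (isBounded_Icc 0 1).subset (range_subset_iff.mpr fun ξ => ⟨(φ i).nonneg, (φ i).le_one⟩)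
  have hdom : ∀ i ∈ s, hMeasure Ω p (E i) ≤ perron Ω (φ i) p := fun i _ =>
    hp.perron_mono (isBounded_range_indicator_one _).bddBelow (hbdd i).bddAbove <|
      indicator_le' (fun ξ hξ => ((φ i).one_of_mem_closedBall (hE i hξ)).ge)
        fun _ _ => (φ i).nonneg
  have hsum : ∀ ξ, ∑ i ∈ s, φ i ξ ≤ 1 := fun ξ => by
    by_cases h : ∃ i ∈ s, φ i ξ ≠ 0
    · obtain ⟨i, hi, hne⟩ := h
      have hmem : ∀ j, φ j ξ ≠ 0 → ξ ∈ closedBall (z j) (2 * r j) := fun j hj =>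
        (not_le.mp fun hle => hj ((φ j).zero_of_le_dist hle)).le
      rw [Finset.sum_eq_single_of_mem i hi fun j hj hji => by_contra fun hjne =>
        disjoint_left.mp (hdisj hj hi hji) (hmem j hjne) (hmem i hne)]
      exact (φ i).le_one
    · push Not at h
      exact (Finset.sum_eq_zero h).trans_le zero_le_one
  exact (Finset.sum_le_sum hdom).trans (hp.sum_perron_le s (fun i _ => hbdd i)
    (fun i _ => hp.resolutiveAt_of_contDiff hd hΩ (φ i).contDiff (φ i).hasCompactSupport) hsum)

end MinimumPrincipleAt

end HarmonicMeasure

section UpperRegularity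

variable {E : Type*} [NormedAddCommGroup E] {F : Set E}

lemma exists_card_cover_closedBall_le (E : Type*) [NormedAddCommGroup E] [NormedSpace ℝ E]
    [ProperSpace E] : ∃ N : ℕ, ∀ (x : E) (r : ℝ), 0 < r →
      ∃ T : Finset E, T.card ≤ N ∧ closedBall x r ⊆ ⋃ c ∈ T, ball c (r / 4) := by
  classical
  obtain ⟨T, -, hT, hcover⟩ := (isCompact_closedBall (0 : E) 1).finite_cover_balls
    (show (0 : ℝ) < 1 / 4 by norm_num)
  refine ⟨hT.toFinset.card, fun x r hr => ⟨hT.toFinset.image fun c => x + r • c,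
    Finset.card_image_le, fun y hy => ?_⟩⟩
  have hy' : r⁻¹ • (y - x) ∈ closedBall (0 : E) 1 := by
    rw [mem_closedBall_zero_iff, norm_smul, norm_inv, Real.norm_of_nonneg hr.le,
      inv_mul_le_iff₀ hr, mul_one]
    exact mem_closedBall_iff_norm.mp hy
  obtain ⟨c, hc, hyc⟩ := mem_iUnion₂.mp (hcover hy')
  refine mem_iUnion₂.mpr
    ⟨x + r • c, Finset.mem_image_of_mem _ (hT.mem_toFinset.mpr hc), ?_⟩
  have hscale : y - (x + r • c) = r • (r⁻¹ • (y - x) - c) := by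
    rw [smul_sub, smul_inv_smul₀ hr.ne', sub_sub]
  rw [mem_ball_iff_norm] at hyc ⊢
  rw [hscale, norm_smul, Real.norm_of_nonneg hr.le]
  linarith [mul_lt_mul_of_pos_left hyc hr]

variable [MeasurableSpace E] {μ : Measure E} {n : ℕ} {C : ℝ}

lemma measure_inter_ball_quarter_diam_le (hC : 0 ≤ C) (hF : 0 < diam F)
    (hreg : ∀ x ∈ F, ∀ r, 0 < r → ENNReal.ofReal r ≤ ediam F →
      μ (F ∩ ball x r) ≤ ENNReal.ofReal (C * r ^ n)) (c : E) :
    μ (F ∩ ball c (diam F / 4)) ≤ ENNReal.ofReal (C * diam F ^ n) := by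
  rcases (F ∩ ball c (diam F / 4)).eq_empty_or_nonempty with hempty | ⟨y, hy, hyc⟩
  · simp only [hempty, measure_empty, zero_le]
  have hsub : ball c (diam F / 4) ⊆ ball y (diam F / 2) :=
    ball_subset_ball' (by linarith [mem_ball'.mp hyc])
  have hle : ENNReal.ofReal (diam F / 2) ≤ ediam F :=
    (ENNReal.ofReal_le_ofReal (half_le_self hF.le)).trans ENNReal.ofReal_toReal_le
  calc μ (F ∩ ball c (diam F / 4)) ≤ μ (F ∩ ball y (diam F / 2)) := by gcongr
    _ ≤ ENNReal.ofReal (C * (diam F / 2) ^ n) := hreg y hy _ (half_pos hF) hle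
    _ ≤ ENNReal.ofReal (C * diam F ^ n) := by gcongr; exact half_le_self hF.le

lemma exists_measure_inter_ball_le [NormedSpace ℝ E] [ProperSpace E] (n : ℕ) (hC : 0 < C) :
    ∃ K : ℝ, 0 < K ∧ ∀ (F : Set E) (μ : Measure E) [NullSingletonClass μ],
      (∀ x ∈ F, ∀ r, 0 < r → ENNReal.ofReal r ≤ ediam F →
        μ (F ∩ ball x r) ≤ ENNReal.ofReal (C * r ^ n)) →
      ∀ x ∈ F, ∀ r, 0 < r → μ (F ∩ ball x r) ≤ ENNReal.ofReal (K * r ^ n) := by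
  obtain ⟨N, hN⟩ := exists_card_cover_closedBall_le E
  refine ⟨(N + 1) * C, by positivity, fun F μ _ hreg x hx r hr => ?_⟩
  rcases le_or_gt (ENNReal.ofReal r) (ediam F) with hrF | hrF
  · refine (hreg x hx r hr hrF).trans (ENNReal.ofReal_le_ofReal ?_)
    gcongr
    exact le_mul_of_one_le_left hC.le (by simp)
  have hbdd : Bornology.IsBounded F := isBounded_iff_ediam_ne_top.mpr hrF.ne_top
  rcases (diam_nonneg (s := F)).eq_or_lt' with hdiam | hdiam
  · have hsub : F ∩ ball x r ⊆ {x} := fun y hy =>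
      dist_le_zero.mp ((dist_le_diam_of_mem hbdd hy.1 hx).trans_eq hdiam)
    exact (measure_mono_null hsub (measure_singleton x)).trans_le zero_le
  have hdr : diam F ≤ r := ENNReal.toReal_le_of_le_ofReal hr.le hrF.le
  obtain ⟨T, hTN, hT⟩ := hN x (diam F) hdiam
  have hcover : F ∩ ball x r ⊆ ⋃ c ∈ T, F ∩ ball c (diam F / 4) := fun y hy => by
    obtain ⟨c, hc, hyc⟩ := mem_iUnion₂.mp (hT (dist_le_diam_of_mem hbdd hy.1 hx))
    exact mem_iUnion₂.mpr ⟨c, hc, hy.1, hyc⟩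
  calc μ (F ∩ ball x r) ≤ ∑ c ∈ T, μ (F ∩ ball c (diam F / 4)) :=
        (measure_mono hcover).trans (measure_biUnion_finset_le _ _)
    _ ≤ T.card • ENNReal.ofReal (C * diam F ^ n) := Finset.sum_le_card_nsmul _ _ _ fun c _ =>
        measure_inter_ball_quarter_diam_le hC.le hdiam hreg c
    _ = ENNReal.ofReal (T.card * (C * diam F ^ n)) := by
        rw [← ENNReal.ofReal_nsmul, nsmul_eq_mul]
    _ ≤ ENNReal.ofReal ((N + 1) * C * r ^ n) := by
        rw [mul_assoc]
        gcongr
        exact (Nat.cast_le.mpr hTN).trans (lt_add_one _).le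

end UpperRegularity

section DyadicCubes

variable {n : ℕ}

lemma sideLen_pos (q : Cube n) : 0 < sideLen q := zpow_pos two_pos _

namespace DSLattice

variable {F : Set (Euc (n + 1))} {μ : Measure (Euc (n + 1))} {Cl lam K : ℝ}
  (L : DSLattice n F μ Cl) {q R : Cube n}

include L in
lemma Cl_pos : 0 < Cl := one_pos.trans_le L.one_le_Cl

variable {L}

lemma dist_le_sideLen (hq : L.mem q) {x y : Euc (n + 1)} (hx : x ∈ q.2) (hy : y ∈ q.2) :
    dist x y ≤ sideLen q := by
  rw [← ENNReal.ofReal_le_ofReal_iff (sideLen_pos q).le, ← edist_dist]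
  exact (edist_le_ediam_of_mem hx hy).trans (L.diam_le _ _ hq)

lemma center_mem_support (hq : L.mem q) : L.center q.2 ∈ F :=
  L.subset_F _ _ hq (L.center_mem _ _ hq)

lemma subset_ball_center (hq : L.mem q) : q.2 ⊆ ball (L.center q.2) (4 * sideLen q) := fun _ hx =>
  (dist_le_sideLen hq hx (L.center_mem _ _ hq)).trans_lt (by linarith [sideLen_pos q])

lemma dilCube_subset_closedBall (hq : L.mem q) :
    dilCube F lam q ⊆ closedBall (L.center q.2) (lam * sideLen q) := by
  rintro x ⟨-, hx⟩
  have hcenter : dist x (L.center q.2) - sideLen q ≤ infDist x q.2 :=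
    (le_infDist (L.nonempty _ _ hq)).mpr fun y hy => by
      linarith [dist_triangle x y (L.center q.2), dist_le_sideLen hq hy (L.center_mem _ _ hq)]
  rw [mem_closedBall]
  linarith

lemma subset_dilCube (hlam : 1 ≤ lam) (hq : L.mem q) : q.2 ⊆ dilCube F lam q := fun _ hx =>
  ⟨L.subset_F _ _ hq hx, (infDist_zero_of_mem hx).trans_le
    (mul_nonneg (sub_nonneg.mpr hlam) (sideLen_pos q).le)⟩

lemma measure_ne_top (hq : L.mem q) : μ q.2 ≠ ⊤ :=
  ne_top_of_le_ne_top ENNReal.ofReal_ne_top (L.measure_ub _ _ hq)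

lemma measure_pos (hq : L.mem q) : 0 < μ q.2 :=
  (ENNReal.ofReal_pos.mpr (mul_pos (inv_pos.mpr L.Cl_pos) (pow_pos (sideLen_pos q) n))).trans_le
    (L.measure_lb _ _ hq)

lemma sideLen_pow_le {s : Set (Euc (n + 1))} (hq : L.mem q) (hqs : q.2 ⊆ s) (hs : μ s ≠ ⊤) :
    sideLen q ^ n ≤ Cl * (μ s).toReal := by
  rw [← inv_mul_le_iff₀ L.Cl_pos, ← ENNReal.ofReal_le_iff_le_toReal hs]
  exact (L.measure_lb _ _ hq).trans (measure_mono hqs)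

lemma exists_sideLen_le (hn : n ≠ 0) (hR : L.mem R) :
    ∃ M, ∀ q, L.mem q → q.2 ⊆ R.2 → sideLen q ≤ M := by
  refine ⟨max 1 (Cl * (μ R.2).toReal), fun q hq hqR => ?_⟩
  rcases le_total (sideLen q) 1 with h | h
  · exact le_max_of_le_left h
  · exact le_max_of_le_right <|
      (le_self_pow₀ h hn).trans (sideLen_pow_le hq hqR (measure_ne_top hR))

lemma countable_of_forall_subset (hR : L.mem R) {𝒬 : Set (Cube n)}
    (h𝒬 : ∀ q ∈ 𝒬, L.mem q ∧ q.2 ⊆ R.2) : 𝒬.Countable := by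
  have : IsFiniteMeasure (μ.restrict R.2) := ⟨by
    rw [Measure.restrict_apply_univ]
    exact (measure_ne_top hR).lt_top⟩
  have hgen : ∀ j, {Q | Q ∈ L.cube j ∧ Q ⊆ R.2}.Countable := fun j => by
    have hcountable := Measure.countable_meas_pos_of_disjoint_iUnion (μ := μ.restrict R.2)
      (As := fun Q : {Q | Q ∈ L.cube j ∧ Q ⊆ R.2} => (Q : Set (Euc (n + 1))))
      (fun Q => L.measurableSet j Q Q.2.1)
      (fun Q Q' h => L.disj j Q Q.2.1 Q' Q'.2.1 (Subtype.coe_ne_coe.mpr h))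
    refine countable_univ_iff.mp (hcountable.mono fun Q _ => ?_)
    rw [mem_ofPred_eq, Measure.restrict_eq_self _ Q.2.2]
    exact measure_pos (show L.mem (j, Q.1) from Q.2.1)
  refine (countable_iUnion fun j => (hgen j).image (Prod.mk j)).mono fun q hq => ?_
  exact mem_iUnion.mpr ⟨q.1, q.2, h𝒬 q hq, Prod.mk.eta⟩

lemma measure_dilCube_two_le
    (hμ : ∀ x ∈ F, ∀ r, 0 < r → μ (ball x r) ≤ ENNReal.ofReal (K * r ^ n)) (hq : L.mem q) :
    μ (dilCube F 2 q) ≤ ENNReal.ofReal (K * (3 * sideLen q) ^ n) := by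
  have hℓ := sideLen_pos q
  exact (measure_mono ((dilCube_subset_closedBall hq).trans
    (closedBall_subset_ball (by linarith)))).trans
      (hμ _ (center_mem_support hq) _ (by positivity))

lemma exists_disjoint_subfamily_cover (hn : n ≠ 0) (hR : L.mem R) {𝒬 : Set (Cube n)}
    (h𝒬 : ∀ q ∈ 𝒬, L.mem q ∧ q.2 ⊆ R.2) :
    ∃ u ⊆ 𝒬, (u.PairwiseDisjoint fun q => closedBall (L.center q.2) (4 * sideLen q)) ∧
      ⋃ q ∈ 𝒬, q.2 ⊆ ⋃ q ∈ u, ball (L.center q.2) (21 * sideLen q) := by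
  obtain ⟨M, hM⟩ := exists_sideLen_le hn hR
  obtain ⟨u, hu, hdisj, hcover⟩ := Vitali.exists_disjoint_subfamily_covering_enlargement_closedBall
    𝒬 (fun q => L.center q.2) (fun q => 4 * sideLen q) (4 * M)
    (fun q hq => by linarith [hM q (h𝒬 q hq).1 (h𝒬 q hq).2]) 5 (by norm_num)
  refine ⟨u, hu, hdisj, iUnion₂_subset fun q hq x hx => ?_⟩
  obtain ⟨b, hb, hqb⟩ := hcover q hq
  refine mem_iUnion₂.mpr ⟨b, hb, ?_⟩
  exact closedBall_subset_ball (by linarith [sideLen_pos b])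
    (hqb (ball_subset_closedBall (subset_ball_center (h𝒬 q hq).1 hx)))

lemma pairwiseDisjoint_maximalWith {P : Cube n → Prop} (hP : ∀ q, P q → L.mem q) :
    {q | MaximalWith L P q}.PairwiseDisjoint Prod.snd := by
  have hlt : ∀ q q', MaximalWith L P q → MaximalWith L P q' → q'.1 < q.1 → Disjoint q.2 q'.2 := by
    intro q q' hq hq' h
    by_contra hmeet
    exact hq.2 q' (hP q' hq'.1) h (L.nested q.1 q'.1 h.le q.2 (hP q hq.1) q'.2 (hP q' hq'.1)
      (not_disjoint_iff_nonempty_inter.mp hmeet)) hq'.1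
  intro q hq q' hq' hne
  rcases lt_trichotomy q.1 q'.1 with h | h | h
  · exact (hlt q' q hq' hq h).symm
  · exact L.disj q.1 q.2 (hP q hq.1) q'.2 (h ▸ hP q' hq'.1) fun h' => hne (Prod.ext h h')
  · exact hlt q q' hq hq' h

end DSLattice

end DyadicCubes

lemma exists_finset_measure_iUnion_diff_lt {α ι : Type*} [MeasurableSpace α] [Countable ι]
    {μ : Measure α} {f : ι → Set α} (hf : ∀ i, MeasurableSet (f i)) (hfin : μ (⋃ i, f i) ≠ ⊤)
    {ε : ENNReal} (hε : 0 < ε) : ∃ s : Finset ι, μ ((⋃ i, f i) \ ⋃ i ∈ s, f i) < ε := by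
  have hempty : ⋂ s : Finset ι, (⋃ i, f i) \ ⋃ i ∈ s, f i = ∅ := by
    refine eq_empty_of_forall_notMem fun x hx => ?_
    obtain ⟨i, hi⟩ := mem_iUnion.mp (mem_iInter.mp hx ∅).1
    exact (mem_iInter.mp hx {i}).2 (mem_iUnion₂.mpr ⟨i, Finset.mem_singleton_self i, hi⟩)
  have hlim := tendsto_measure_iInter_atTop (μ := μ)
    (s := fun s : Finset ι => (⋃ i, f i) \ ⋃ i ∈ s, f i)
    (fun s => ((MeasurableSet.iUnion hf).diff
      (s.measurableSet_biUnion fun i _ => hf i)).nullMeasurableSet)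
    (fun s t hst => sdiff_subset_sdiff_right (biUnion_subset_biUnion_left hst))
    ⟨∅, measure_ne_top_of_subset sdiff_subset hfin⟩
  rw [hempty, measure_empty] at hlim
  exact (hlim.eventually (gt_mem_nhds hε)).exists

section DensityCubes

variable {n : ℕ} {Ω : Set (Euc (n + 1))} {p : Euc (n + 1)} {μ : Measure (Euc (n + 1))}
  {Cl K A B c' : ℝ} {L : DSLattice n (frontier Ω) μ Cl} {R₀ : Cube n}

lemma measurableSet_biUnion_maximalWith (hR : L.mem R₀) {P : Cube n → Prop}
    (hP : ∀ q, P q → L.mem q ∧ q.2 ⊆ R₀.2) :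
    MeasurableSet (⋃ q ∈ {q | MaximalWith L P q}, q.2) :=
  .biUnion (DSLattice.countable_of_forall_subset hR fun q hq => hP q hq.1) fun q hq =>
    L.measurableSet _ _ (hP q hq.1).1

namespace MinimumPrincipleAt

variable (hp : MinimumPrincipleAt Ω p)

include hp

lemma measure_biUnion_le_of_sideLen_pow_le (hn : 2 ≤ n) (hΩ : IsOpen Ω) (hK : 0 ≤ K) (hB : 0 ≤ B)
    (hμ : ∀ x ∈ frontier Ω, ∀ r, 0 < r → μ (ball x r) ≤ ENNReal.ofReal (K * r ^ n))
    (hR : L.mem R₀) {𝒬 : Set (Cube n)} (h𝒬 : ∀ q ∈ 𝒬, L.mem q ∧ q.2 ⊆ R₀.2)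
    (hle : ∀ q ∈ 𝒬, sideLen q ^ n ≤ B * hMeasure Ω p (dilCube (frontier Ω) 2 q)) :
    μ (⋃ q ∈ 𝒬, q.2) ≤ ENNReal.ofReal (K * 21 ^ n * B) := by
  obtain ⟨u, hu, hdisj, hcover⟩ :=
    DSLattice.exists_disjoint_subfamily_cover (by lia : n ≠ 0) hR h𝒬
  have hucount : u.Countable :=
    DSLattice.countable_of_forall_subset hR fun q hq => h𝒬 q (hu hq)
  have hpow : ∀ q : u, 0 ≤ K * 21 ^ n * sideLen q.1 ^ n := fun q =>
    mul_nonneg (by positivity) (pow_nonneg (sideLen_pos q.1).le n)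
  have hsum : ∀ s : Finset u, ∑ q ∈ s, sideLen q.1 ^ n ≤ B := fun s =>
    calc ∑ q ∈ s, sideLen q.1 ^ n
        ≤ ∑ q ∈ s, B * hMeasure Ω p (dilCube (frontier Ω) 2 q.1) :=
          Finset.sum_le_sum fun q _ => hle q (hu q.2)
      _ = B * ∑ q ∈ s, hMeasure Ω p (dilCube (frontier Ω) 2 q.1) := (Finset.mul_sum ..).symm
      _ ≤ B * 1 := by
          refine mul_le_mul_of_nonneg_left (hp.sum_hMeasure_le_one (by lia) hΩ
            (fun q : u => mul_pos two_pos (sideLen_pos q.1))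
            (fun q => DSLattice.dilCube_subset_closedBall (h𝒬 q (hu q.2)).1) ?_) hB
          intro q _ q' _ hne
          simpa only [Function.onFun, ← mul_assoc, show (2 : ℝ) * 2 = 4 by norm_num]
            using hdisj q.2 q'.2 (Subtype.coe_ne_coe.mpr hne)
      _ = B := mul_one B
  calc μ (⋃ q ∈ 𝒬, q.2) ≤ ∑' q : u, μ (ball (L.center q.1.2) (21 * sideLen q.1)) :=
        (measure_mono hcover).trans (measure_biUnion_le μ hucount _)
    _ ≤ ∑' q : u, ENNReal.ofReal (K * 21 ^ n * sideLen q.1 ^ n) :=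
        ENNReal.tsum_le_tsum fun q => by
          rw [mul_assoc, ← mul_pow]
          exact hμ _ (DSLattice.center_mem_support (h𝒬 q (hu q.2)).1) _
            (mul_pos (by norm_num) (sideLen_pos q.1))
    _ ≤ ENNReal.ofReal (K * 21 ^ n * B) := by
        rw [ENNReal.tsum_eq_iSup_sum]
        refine iSup_le fun s => ?_
        rw [← ENNReal.ofReal_sum_of_nonneg fun q _ => hpow q, ← Finset.mul_sum]
        gcongr
        exact hsum s

lemma sideLen_pow_le_of_hdCond (hA : 0 < A) (hc' : 0 < c') (hK : 0 < K)
    (hμ : ∀ x ∈ frontier Ω, ∀ r, 0 < r → μ (ball x r) ≤ ENNReal.ofReal (K * r ^ n))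
    (hR : L.mem R₀) (hcR : c' ≤ hMeasure Ω p R₀.2) {q : Cube n} (hq : HDcond Ω μ L p R₀ A q) :
    sideLen q ^ n ≤ Cl * (K * (3 * sideLen R₀) ^ n) / (c' * A) *
      hMeasure Ω p (dilCube (frontier Ω) 2 q) := by
  obtain ⟨hqL, -, hdens⟩ := hq
  have hfin : ∀ {q}, L.mem q → μ (dilCube (frontier Ω) 2 q) ≠ ⊤ := fun hq =>
    ne_top_of_le_ne_top ENNReal.ofReal_ne_top (DSLattice.measure_dilCube_two_le hμ hq)
  have hpos : ∀ {q}, L.mem q → 0 < (μ (dilCube (frontier Ω) 2 q)).toReal := fun hq =>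
    ENNReal.toReal_pos ((DSLattice.measure_pos hq).trans_le
      (measure_mono (DSLattice.subset_dilCube one_le_two hq))).ne' (hfin hq)
  have hRpos := sideLen_pos R₀
  have hdensR : c' / (K * (3 * sideLen R₀) ^ n) ≤ dens Ω μ p 2 R₀ := by
    have hle := hcR.trans (hp.hMeasure_mono (DSLattice.subset_dilCube one_le_two hR))
    exact div_le_div₀ (hc'.le.trans hle) hle (hpos hR) <|
      ENNReal.toReal_le_of_le_ofReal (by positivity) (DSLattice.measure_dilCube_two_le hμ hR)
  have hdensq : A * (c' / (K * (3 * sideLen R₀) ^ n)) * (μ (dilCube (frontier Ω) 2 q)).toReal ≤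
      hMeasure Ω p (dilCube (frontier Ω) 2 q) :=
    (le_div_iff₀ (hpos hqL)).mp ((mul_le_mul_of_nonneg_left hdensR hA.le).trans hdens)
  have hCl := L.Cl_pos
  calc sideLen q ^ n ≤ Cl * (μ (dilCube (frontier Ω) 2 q)).toReal :=
        DSLattice.sideLen_pow_le hqL (DSLattice.subset_dilCube one_le_two hqL) (hfin hqL)
    _ = Cl * (K * (3 * sideLen R₀) ^ n) / (c' * A) *
        (A * (c' / (K * (3 * sideLen R₀) ^ n)) * (μ (dilCube (frontier Ω) 2 q)).toReal) := by
        field_simp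
    _ ≤ _ := mul_le_mul_of_nonneg_left hdensq (by positivity)

lemma measure_BHset_le (hn : 2 ≤ n) (hΩ : IsOpen Ω) (hA : 0 < A) (hc' : 0 < c') (hK : 0 < K)
    (hμ : ∀ x ∈ frontier Ω, ∀ r, 0 < r → μ (ball x r) ≤ ENNReal.ofReal (K * r ^ n))
    (hR : L.mem R₀) (hcR : c' ≤ hMeasure Ω p R₀.2) :
    μ (BHset Ω μ L p R₀ A) ≤ ENNReal.ofReal (K ^ 2 * 63 ^ n * Cl ^ 2 / (c' * A)) * μ R₀.2 := by
  have hCl := L.Cl_pos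
  have hRpos := sideLen_pos R₀
  calc μ (BHset Ω μ L p R₀ A)
      ≤ ENNReal.ofReal (K * 21 ^ n * (Cl * (K * (3 * sideLen R₀) ^ n) / (c' * A))) :=
        hp.measure_biUnion_le_of_sideLen_pow_le hn hΩ hK.le (by positivity) hμ hR
          (fun q hq => ⟨hq.1.1, hq.1.2.1⟩)
          (fun q hq => hp.sideLen_pow_le_of_hdCond hA hc' hK hμ hR hcR hq.1)
    _ = ENNReal.ofReal (K ^ 2 * 63 ^ n * Cl ^ 2 / (c' * A)) *
          ENNReal.ofReal (Cl⁻¹ * sideLen R₀ ^ n) := by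
        rw [← ENNReal.ofReal_mul (by positivity), show (63 : ℝ) = 21 * 3 by norm_num, mul_pow,
          mul_pow]
        field_simp
    _ ≤ _ := by
        gcongr
        exact L.measure_lb _ _ hR

lemma hMeasure_biUnion_le_of_ldCond (hA : 0 < A) (hR : L.mem R₀) {ι : Type*} {s : Finset ι}
    {Q : ι → Cube n} (hs : ∀ i ∈ s, LDcond Ω μ L p R₀ A (Q i))
    (hdisj : (s : Set ι).PairwiseDisjoint fun i => (Q i).2) :
    hMeasure Ω p (⋃ i ∈ s, (Q i).2) ≤ A⁻¹ * hMeasure Ω p R₀.2 := by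
  have hpos : ∀ {q}, L.mem q → 0 < (μ q.2).toReal := fun hq =>
    ENNReal.toReal_pos (DSLattice.measure_pos hq).ne' (DSLattice.measure_ne_top hq)
  have hdensity : 0 ≤ A⁻¹ * (hMeasure Ω p R₀.2 / (μ R₀.2).toReal) :=
    mul_nonneg (inv_nonneg.mpr hA.le) (div_nonneg hp.hMeasure_nonneg (hpos hR).le)
  have hsum : ∑ i ∈ s, (μ (Q i).2).toReal ≤ (μ R₀.2).toReal := by
    rw [← ENNReal.toReal_sum fun i hi => DSLattice.measure_ne_top (hs i hi).1,
      ← measure_biUnion_finset hdisj fun i hi => L.measurableSet _ _ (hs i hi).1]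
    exact ENNReal.toReal_mono (DSLattice.measure_ne_top hR)
      (measure_mono (iUnion₂_subset fun i hi => (hs i hi).2.1))
  calc hMeasure Ω p (⋃ i ∈ s, (Q i).2) ≤ ∑ i ∈ s, hMeasure Ω p (Q i).2 := hp.hMeasure_biUnion_le s _
    _ ≤ ∑ i ∈ s, A⁻¹ * (hMeasure Ω p R₀.2 / (μ R₀.2).toReal) * (μ (Q i).2).toReal :=
        Finset.sum_le_sum fun i hi => (div_le_iff₀ (hpos (hs i hi).1)).mp (hs i hi).2.2
    _ = A⁻¹ * (hMeasure Ω p R₀.2 / (μ R₀.2).toReal) * ∑ i ∈ s, (μ (Q i).2).toReal :=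
        (Finset.mul_sum ..).symm
    _ ≤ A⁻¹ * (hMeasure Ω p R₀.2 / (μ R₀.2).toReal) * (μ R₀.2).toReal :=
        mul_le_mul_of_nonneg_left hsum hdensity
    _ = A⁻¹ * hMeasure Ω p R₀.2 := by rw [mul_assoc, div_mul_cancel₀ _ (hpos hR).ne']

lemma hMeasure_BLset_le {δ ε : ℝ}
    (hsmall : ∀ E, MeasurableSet E → E ⊆ R₀.2 → μ E ≤ ENNReal.ofReal δ * μ R₀.2 →
      hMeasure Ω p E ≤ ε) (hA : 0 < A) (hδ : 0 < δ) (hR : L.mem R₀) :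
    hMeasure Ω p (BLset Ω μ L p R₀ A) ≤ A⁻¹ * hMeasure Ω p R₀.2 + ε := by
  let Q : LDfam Ω μ L p R₀ A → Cube n := Subtype.val
  have hQ : ∀ q, MeasurableSet (Q q).2 := fun q => L.measurableSet _ _ q.2.1.1
  have hdisj : ∀ q q', q ≠ q' → Disjoint (Q q).2 (Q q').2 := fun q q' h =>
    DSLattice.pairwiseDisjoint_maximalWith (fun _ hq => hq.1) q.2 q'.2 (Subtype.coe_ne_coe.mpr h)
  have hunion : BLset Ω μ L p R₀ A = ⋃ q, (Q q).2 := biUnion_eq_iUnion _ _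
  have hsub : ⋃ q, (Q q).2 ⊆ R₀.2 := iUnion_subset fun q => q.2.1.2.1
  have hcount : (LDfam Ω μ L p R₀ A).Countable :=
    DSLattice.countable_of_forall_subset hR fun q hq => ⟨hq.1.1, hq.1.2.1⟩
  have : Countable (LDfam Ω μ L p R₀ A) := hcount.to_subtype
  obtain ⟨s, hs⟩ := exists_finset_measure_iUnion_diff_lt hQ
    (measure_ne_top_of_subset hsub (DSLattice.measure_ne_top hR))
    (ENNReal.mul_pos (ENNReal.ofReal_pos.mpr hδ).ne' (DSLattice.measure_pos hR).ne')
  calc hMeasure Ω p (BLset Ω μ L p R₀ A)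
      = hMeasure Ω p ((⋃ q ∈ s, (Q q).2) ∪ (⋃ q, (Q q).2) \ ⋃ q ∈ s, (Q q).2) := by
        rw [hunion, union_sdiff_cancel (iUnion₂_subset_iUnion (· ∈ s) fun q => (Q q).2)]
    _ ≤ _ := hp.hMeasure_union_le
    _ ≤ A⁻¹ * hMeasure Ω p R₀.2 + ε := add_le_add
        (hp.hMeasure_biUnion_le_of_ldCond hA hR (fun q _ => q.2.1) fun q _ q' _ => hdisj q q')
        (hsmall _ ((MeasurableSet.iUnion hQ).diff (s.measurableSet_biUnion fun q _ => hQ q))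
          (sdiff_subset.trans hsub) hs.le)

end MinimumPrincipleAt

end DensityCubes

section GoodSet

variable {n : ℕ} {Ω : Set (Euc (n + 1))} {p : Euc (n + 1)} {μ : Measure (Euc (n + 1))}
  {Cl K A c' δ ε : ℝ} {L : DSLattice n (frontier Ω) μ Cl} {R₀ : Cube n}

/-- The good set `G₀ = R₀ \ (B_H ∪ B_L)`. -/
def goodSet (Ω : Set (Euc (n + 1))) (μ : Measure (Euc (n + 1))) (L : DSLattice n (frontier Ω) μ Cl)
    (p : Euc (n + 1)) (R₀ : Cube n) (A : ℝ) : Set (Euc (n + 1)) :=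
  R₀.2 \ (BHset Ω μ L p R₀ A ∪ BLset Ω μ L p R₀ A)

namespace MinimumPrincipleAt

variable (hp : MinimumPrincipleAt Ω p)

include hp

lemma le_hMeasure_goodSet (hA : 2 ≤ A) (hδ : 0 < δ) (hR : L.mem R₀)
    (hBH : μ (BHset Ω μ L p R₀ A) ≤ ENNReal.ofReal δ * μ R₀.2)
    (hsmall : ∀ E, MeasurableSet E → E ⊆ R₀.2 → μ E ≤ ENNReal.ofReal δ * μ R₀.2 →
      hMeasure Ω p E ≤ ε) :
    hMeasure Ω p R₀.2 / 2 - 2 * ε ≤ hMeasure Ω p (goodSet Ω μ L p R₀ A) := by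
  have hhigh : hMeasure Ω p (BHset Ω μ L p R₀ A) ≤ ε :=
    hsmall _ (measurableSet_biUnion_maximalWith hR fun q hq => ⟨hq.1, hq.2.1⟩)
      (iUnion₂_subset fun q hq => hq.1.2.1) hBH
  have hlow : hMeasure Ω p (BLset Ω μ L p R₀ A) ≤ hMeasure Ω p R₀.2 / 2 + ε := by
    have hinv : A⁻¹ ≤ 1 / 2 := by rw [one_div]; gcongr
    linarith [hp.hMeasure_BLset_le hsmall (two_pos.trans_le hA) hδ hR,
      mul_le_mul_of_nonneg_right hinv (hp.hMeasure_nonneg (A := R₀.2))]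
  have hcover : hMeasure Ω p R₀.2 ≤
      hMeasure Ω p (goodSet Ω μ L p R₀ A ∪ (BHset Ω μ L p R₀ A ∪ BLset Ω μ L p R₀ A)) :=
    hp.hMeasure_mono (subset_sdiff_union _ _)
  linarith [hcover.trans hp.hMeasure_union_le,
    hp.hMeasure_union_le (A := BHset Ω μ L p R₀ A) (B := BLset Ω μ L p R₀ A)]

lemma hMeasure_le_of_weakAInftyBallWith {D : ℝ → ℝ}
    {L : DSLattice n (frontier Ω) (μH[n].restrict (frontier Ω)) Cl} (hR : L.mem R₀)
    (hw : WeakAInftyBallWith n Ω p (L.center R₀.2) (4 * sideLen R₀) D) (hε : ε ∈ Ioo 0 1)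
    {E : Set (Euc (n + 1))} (hE : MeasurableSet E) (hER : E ⊆ R₀.2)
    (hμE : μH[n].restrict (frontier Ω) E ≤
      ENNReal.ofReal (D ε) * μH[n].restrict (frontier Ω) R₀.2) : hMeasure Ω p E ≤ ε := by
  have hRΩ : R₀.2 ⊆ frontier Ω := L.subset_F _ _ hR
  have hRball : R₀.2 ⊆ ball (L.center R₀.2) (4 * sideLen R₀) ∩ frontier Ω :=
    subset_inter (DSLattice.subset_ball_center hR) hRΩ
  rw [Measure.restrict_eq_self _ (hER.trans hRΩ), Measure.restrict_eq_self _ hRΩ] at hμE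
  calc hMeasure Ω p E
      ≤ ε * hMeasure Ω p (ball (L.center R₀.2) (2 * (4 * sideLen R₀))) :=
        (hw ε hε).2 E hE (hER.trans hRball) (hμE.trans (by gcongr))
    _ ≤ ε := mul_le_of_le_one_right hε.1.le hp.hMeasure_le_one

lemma goodSet_bounds (hn : 2 ≤ n) (hΩ : IsOpen Ω) (hK : 0 < K) (hc' : 0 < c') (hδ : 0 < δ)
    (hA : 2 ≤ A) (hAδ : K ^ 2 * 63 ^ n * Cl ^ 2 / (c' * δ) ≤ A)
    (hμ : ∀ x ∈ frontier Ω, ∀ r, 0 < r → μ (ball x r) ≤ ENNReal.ofReal (K * r ^ n))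
    (hR : L.mem R₀) (hcR : c' ≤ hMeasure Ω p R₀.2)
    (hsmall : ∀ E, MeasurableSet E → E ⊆ R₀.2 → μ E ≤ ENNReal.ofReal δ * μ R₀.2 →
      hMeasure Ω p E ≤ c' / 8) :
    c' / 4 ≤ hMeasure Ω p (goodSet Ω μ L p R₀ A) ∧
      ENNReal.ofReal δ * μ R₀.2 ≤ μ (goodSet Ω μ L p R₀ A) := by
  have hA0 : 0 < A := two_pos.trans_le hA
  have hBH : μ (BHset Ω μ L p R₀ A) ≤ ENNReal.ofReal δ * μ R₀.2 := by
    refine (hp.measure_BHset_le hn hΩ hA0 hc' hK hμ hR hcR).trans ?_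
    gcongr
    rw [div_le_iff₀ (by positivity)] at hAδ ⊢
    linarith
  have hgood : c' / 4 ≤ hMeasure Ω p (goodSet Ω μ L p R₀ A) := by
    linarith [hp.le_hMeasure_goodSet hA hδ hR hBH hsmall]
  have hmeas : MeasurableSet (goodSet Ω μ L p R₀ A) := (L.measurableSet _ _ hR).diff
    ((measurableSet_biUnion_maximalWith hR fun q hq => ⟨hq.1, hq.2.1⟩).union
      (measurableSet_biUnion_maximalWith hR fun q hq => ⟨hq.1, hq.2.1⟩))
  refine ⟨hgood, not_lt.mp fun hlt => ?_⟩
  linarith [hsmall _ hmeas sdiff_subset hlt.le]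

end MinimumPrincipleAt

end GoodSet

theorem good_set_estimate_general (n : ℕ) (hn : 2 ≤ n) {C₀ Cl c' : ℝ} (hC₀ : 0 < C₀)
    (hc' : 0 < c') (D : ℝ → ℝ) :
    ∃ A₀ c₁ : ℝ, 1 ≤ A₀ ∧ 0 < c₁ ∧ ∀ A, A₀ ≤ A → ∀ Ω : Set (Euc (n + 1)), IsOpen Ω →
      (∀ x ∈ frontier Ω, ∀ r, 0 < r → ENNReal.ofReal r ≤ ediam (frontier Ω) →
        μH[n] (frontier Ω ∩ ball x r) ≤ ENNReal.ofReal (C₀ * r ^ n)) →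
      ∀ (L : DSLattice n (frontier Ω) (μH[n].restrict (frontier Ω)) Cl) (R₀ : Cube n), L.mem R₀ →
      ∀ p ∈ Ω, c' ≤ hMeasure Ω p R₀.2 →
        WeakAInftyBallWith n Ω p (L.center R₀.2) (4 * sideLen R₀) D →
        c₁ ≤ hMeasure Ω p (goodSet Ω (μH[n].restrict (frontier Ω)) L p R₀ A) ∧
        ENNReal.ofReal c₁ * μH[n].restrict (frontier Ω) R₀.2 ≤
          μH[n].restrict (frontier Ω) (goodSet Ω (μH[n].restrict (frontier Ω)) L p R₀ A) := by
  have : NullSingletonClass (μH[n] : Measure (Euc (n + 1))) :=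
    Measure.nullSingletonClass_hausdorff _ (Nat.cast_pos.mpr (by lia))
  obtain ⟨K, hK, hupper⟩ := exists_measure_inter_ball_le (E := Euc (n + 1)) n hC₀
  obtain ⟨ε, hε, hεc'⟩ : ∃ ε ∈ Ioo (0 : ℝ) 1, ε ≤ c' / 8 :=
    ⟨min (c' / 8) (1 / 2), mem_Ioo.mpr ⟨lt_min (by positivity) one_half_pos,
      (min_le_right _ _).trans_lt one_half_lt_one⟩, min_le_left _ _⟩
  obtain ⟨δ, hδ, hDδ⟩ : ∃ δ, 0 < δ ∧ (0 < D ε → δ = D ε) := by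
    by_cases h : 0 < D ε
    exacts [⟨D ε, h, fun _ => rfl⟩, ⟨1, one_pos, fun h' => absurd h' h⟩]
  refine ⟨max 2 (K ^ 2 * 63 ^ n * Cl ^ 2 / (c' * δ)), min (c' / 4) δ,
    le_max_of_le_left one_le_two, by positivity, fun A hA Ω hΩ hreg L R₀ hR p _ hcR hw => ?_⟩
  have hp : MinimumPrincipleAt Ω p := minimumPrincipleAt_of_perron_ne_zero
    (isBounded_range_indicator_one _).bddAbove (hc'.trans_le hcR).ne'
  have hball : ∀ x ∈ frontier Ω, ∀ r, 0 < r →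
      μH[n].restrict (frontier Ω) (ball x r) ≤ ENNReal.ofReal (K * r ^ n) := fun x hx r hr => by
    rw [Measure.restrict_apply measurableSet_ball, inter_comm]
    exact hupper _ _ hreg x hx r hr
  obtain ⟨hgood, hmeas⟩ := hp.goodSet_bounds hn hΩ hK hc' hδ (le_of_max_le_left hA)
    (le_of_max_le_right hA) hball hR hcR fun E hE hER hEδ =>
      (hp.hMeasure_le_of_weakAInftyBallWith hR hw hε hE hER (hDδ (hw ε hε).1.1 ▸ hEδ)).trans hεc'
  exact ⟨(min_le_left _ _).trans hgood,
    (mul_le_mul_left (ENNReal.ofReal_le_ofReal (min_le_right _ _)) _).trans hmeas⟩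

/-- Under the standing assumptions, there are `A₀ ≥ 1` and `c₁ > 0`,
depending only on `n`, the AD-regularity and lattice constants, `c`, `c'` and the
weak-`A∞` gauge, such that for `A ≥ A₀` the set `G₀ := R₀ \ (B_H ∪ B_L)` satisfies
`ω^p(G₀) ≥ c₁` and `μ(G₀) ≥ c₁ μ(R₀)`. -/
theorem good_set_estimate
    (n : ℕ) (hn : 2 ≤ n) (C₀ Cl c c' : ℝ) (hC₀ : 1 ≤ C₀) (hCl : 1 ≤ Cl)
    (hc : 0 < c) (hc' : 0 < c') (D : ℝ → ℝ) :
    ∃ A₀ c₁ : ℝ, 1 ≤ A₀ ∧ 0 < c₁ ∧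
      ∀ A : ℝ, A₀ ≤ A →
      ∀ (F : Set (Euc (n+1))), IsClosed F → ADRegular n C₀ F →
      ∀ Ω : Set (Euc (n+1)), Ω = Fᶜ → frontier Ω = F →
      ∀ μ : Measure (Euc (n+1)), μ = (μH[n]).restrict (frontier Ω) →
      ∀ (L : DSLattice n (frontier Ω) μ Cl) (R₀ : Cube n) (p : Euc (n+1)),
        L.mem R₀ → p ∈ Ω → p ∉ cubeBall L 4 R₀ →
        c * sideLen R₀ ≤ infDist p (frontier Ω) →
        infDist p (frontier Ω) ≤ infDist p R₀.2 →
        infDist p R₀.2 ≤ c⁻¹ * sideLen R₀ →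
        c' ≤ hMeasure Ω p R₀.2 →
        WeakAInftyBallWith n Ω p (L.center R₀.2) (4 * sideLen R₀) D →
        c₁ ≤ hMeasure Ω p (R₀.2 \ (BHset Ω μ L p R₀ A ∪ BLset Ω μ L p R₀ A)) ∧
        ENNReal.ofReal c₁ * μ R₀.2 ≤
          μ (R₀.2 \ (BHset Ω μ L p R₀ A ∪ BLset Ω μ L p R₀ A)) := by
  obtain ⟨A₀, c₁, hA₀, hc₁, h⟩ := good_set_estimate_general n hn (one_pos.trans_le hC₀) hc' D
  refine ⟨A₀, c₁, hA₀, hc₁, ?_⟩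
  rintro A hA F hF hreg Ω hΩ rfl _ rfl L R₀ p hR hp - - - - hcR hw
  exact h A hA Ω (hΩ ▸ hF.isOpen_compl) (fun x hx r hr hrF => (hreg x hx r hr hrF).2) L R₀ hR p hp
    hcR hw

end HarmMeas
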